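/- For every β ≥ 0 and every T > 0, classical solutions of the nonlocal boundary value problem are unique: if ρ_1, ρ_2 are classical solutions of ∂_t ρ = ∂_u( ∂_u ρ - β χ(ρ) ∂_u (J^neum ⋆ ρ(t,·)) ) on (0,T) × (-1,1) with values in [0,1], with the same boundary values ρ_i(t,-1) = ρ_-, ρ_i(t,1) = ρ_+ for all t ∈ [0,T] and the same initial datum ρ_1(0,·) = ρ_2(0,·), then ρ_1 = ρ_2 on [0,T] × [-1,1]. -/

import Mathlib

open MeasureTheory Set

noncomputable section

/-- The Neumann (reflected) Kac kernel. -/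
def Jneum (j : ℝ → ℝ) (u v : ℝ) : ℝ := j (v - u) + j (2 - v - u) + j (-2 - v - u)

/-- Convolution with the Neumann kernel: `(J^neum ⋆ m)(u) = ∫_{-1}^1 J^neum(u,v) m(v) dv`. -/
def convJ (j m : ℝ → ℝ) (u : ℝ) : ℝ := ∫ v in (-1:ℝ)..1, Jneum j u v * m v

/-- Mobility `χ(ρ) = ρ(1-ρ)`. -/
def chi (ρ : ℝ) : ℝ := ρ * (1 - ρ)

/-- A classical solution on `[0,T]` of the nonlocal boundary value problem
`∂_t ρ = ∂_u(∂_u ρ - β χ(ρ) ∂_u (J^neum ⋆ ρ(t,·)))` on `(0,T) × (-1,1)`,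
with values in `[0,1]` and boundary values `ρ(t,∓1) = ρ∓`. -/
structure ClassicalSol (j : ℝ → ℝ) (β ρm ρp T : ℝ) (ρ : ℝ → ℝ → ℝ) : Prop where
  cont : ContinuousOn (Function.uncurry ρ) (Icc 0 T ×ˢ Icc (-1:ℝ) 1)
  range : ∀ t ∈ Icc (0:ℝ) T, ∀ u ∈ Icc (-1:ℝ) 1, ρ t u ∈ Icc (0:ℝ) 1
  bdry_left : ∀ t ∈ Icc (0:ℝ) T, ρ t (-1) = ρm
  bdry_right : ∀ t ∈ Icc (0:ℝ) T, ρ t 1 = ρp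
  smooth_t : ∀ u ∈ Ioo (-1:ℝ) 1, ContDiffOn ℝ 1 (fun t => ρ t u) (Ioo 0 T)
  smooth_u : ∀ t ∈ Ioo (0:ℝ) T, ContDiffOn ℝ 2 (fun u => ρ t u) (Ioo (-1:ℝ) 1)
  du_ext : ∀ t ∈ Ioo (0:ℝ) T, ∃ g : ℝ → ℝ, ContinuousOn g (Icc (-1:ℝ) 1) ∧
      ∀ u ∈ Ioo (-1:ℝ) 1, g u = deriv (fun w => ρ t w) u
  pde : ∀ t ∈ Ioo (0:ℝ) T, ∀ u ∈ Ioo (-1:ℝ) 1,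
    deriv (fun s => ρ s u) t =
      deriv (fun w =>
        deriv (fun z => ρ t z) w - β * chi (ρ t w) * deriv (convJ j (fun z => ρ t z)) w) u

/-!
A classical solution carries no joint regularity in `(t, x)` and no bound on `∂ₓρ` uniform in time,
so Grönwall and energy arguments are not directly available. Everything is instead deduced from the
maximum principle with doubled variables: the increments `v(t, x) - v(t, y)` of a function whose
heat operator `∂ₜv - ∂ₓₓv` is at most a drift times `|∂ₓv|` plus a source `F / √(t - s)` stay below
a barrier, which gives an oscillation bound and a Lipschitz bound of order `1 / √(t - s)`.

Expanding the flux, `∂ₜρ - ∂ₓₓρ` is linear in `∂ₓρ` with coefficients bounded by nonlocal terms,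
whose derivatives integration by parts moves onto `ρ`. Over short times the smoothing estimate
therefore improves itself to a universal constant, once *some* estimate of that form is known. This
a priori finiteness comes from Baire's theorem: each `ρ t` is Lipschitz, the sets of times with a
given Lipschitz constant are closed, and the smoothing estimate propagates such a constant forward.

The difference of two solutions satisfies an equation of the same kind, so if they agree at time `s`
the same estimate holds with arbitrarily small initial oscillation, and they agree on `[s, s + δ]`
with `δ` depending only on `β` and the kernel.
-/

open Filter Topology

/-- The heat operator `∂ₜ v - ∂ₓₓ v`. -/
def heatOp (v : ℝ → ℝ → ℝ) (t x : ℝ) : ℝ :=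
  deriv (fun τ => v τ x) t - deriv (deriv (v t)) x

/-- Regularity of a parabolic evolution on `[s, t₁] × [a, b]` whose lateral boundary values do not
depend on time. The derivatives exist separately in `t` and `x`, with no joint control. -/
structure ParabolicRegular (a b s t₁ : ℝ) (v : ℝ → ℝ → ℝ) : Prop where
  continuousOn : ContinuousOn (Function.uncurry v) (Icc s t₁ ×ˢ Icc a b)
  left_eq : ∀ t ∈ Icc s t₁, v t a = v s a
  right_eq : ∀ t ∈ Icc s t₁, v t b = v s b
  differentiableAt_time : ∀ t ∈ Ioc s t₁, ∀ x ∈ Ioo a b, DifferentiableAt ℝ (fun τ => v τ x) t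
  differentiableAt_space : ∀ t ∈ Ioc s t₁, ∀ x ∈ Ioo a b, DifferentiableAt ℝ (v t) x
  differentiableAt_deriv : ∀ t ∈ Ioc s t₁, ∀ x ∈ Ioo a b, DifferentiableAt ℝ (deriv (v t)) x

/-- A strict supersolution `Φ(t, r)`, `0 ≤ r ≤ ℓ`, for the increments `v(t, y + r) - v(t, y)` of a
function with `|∂ₜ v - ∂ₓₓ v| ≤ B |∂ₓ v| + F t`. The factor `k` accounts for the number of
endpoints of the increment that lie in the interior. -/
structure StrictBarrier (ℓ s t₁ B : ℝ) (F : ℝ → ℝ) (Φ : ℝ → ℝ → ℝ) : Prop where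
  continuousOn : ContinuousOn (Function.uncurry Φ) (Icc s t₁ ×ˢ Icc 0 ℓ)
  zero_nonneg : ∀ t ∈ Icc s t₁, 0 ≤ Φ t 0
  strict : ∀ t ∈ Ioc s t₁, ∀ r ∈ Ioo 0 ℓ, ∃ (Φt : ℝ) (Φr : ℝ → ℝ) (Φrr : ℝ),
    HasDerivAt (fun τ => Φ τ r) Φt t ∧ (∀ᶠ r' in 𝓝 r, HasDerivAt (Φ t) (Φr r') r') ∧
      HasDerivAt Φr Φrr r ∧ ∀ k ∈ Icc (1 : ℝ) 2, k * (Φrr + B * |Φr r| + F t) < Φt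

section MaximumPrinciple

lemma secondDeriv_nonpos_of_isLocalMax {g g' : ℝ → ℝ} {g'' x : ℝ}
    (hg : ∀ᶠ y in 𝓝 x, HasDerivAt g (g' y) y) (hg' : HasDerivAt g' g'' x)
    (hmax : IsLocalMax g x) : g'' ≤ 0 := by
  by_contra! hpos
  have hderiv : deriv g =ᶠ[𝓝 x] g' := hg.mono fun y hy => hy.deriv
  have hderiv2 : deriv (deriv g) x = g'' := by rw [hderiv.deriv_eq, hg'.deriv]
  have hmin : IsLocalMin g x := isLocalMin_of_deriv_deriv_pos (hderiv2 ▸ hpos)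
    hmax.deriv_eq_zero hg.self_of_nhds.continuousAt
  have hconst : g =ᶠ[𝓝 x] fun _ => g x := by
    filter_upwards [hmax, hmin] with y hle hge using le_antisymm hle hge
  have hzero : deriv (deriv g) x = 0 := by rw [hconst.deriv.deriv_eq]; simp
  linarith

lemma deriv_nonneg_of_isMaxOn_Icc {h : ℝ → ℝ} {d s t₁ t : ℝ} (ht : t ∈ Ioc s t₁)
    (hd : HasDerivWithinAt h d (Icc s t₁) t) (hmax : IsMaxOn h (Icc s t₁) t) : 0 ≤ d := by
  have hcone : s - t ∈ posTangentConeAt (Icc s t₁) t :=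
    sub_mem_posTangentConeAt_of_segment_subset <|
      (convex_Icc s t₁).segment_subset (Ioc_subset_Icc_self ht) ⟨le_rfl, ht.1.le.trans ht.2⟩
  have hle := hmax.localize.hasFDerivWithinAt_nonpos hd.hasFDerivWithinAt hcone
  have hmul : (s - t) * d ≤ 0 := by simpa using hle
  nlinarith [ht.1]

variable {a b s t₁ B : ℝ} {v w Φ : ℝ → ℝ → ℝ} {F : ℝ → ℝ}

lemma heatOp_neg (v : ℝ → ℝ → ℝ) (t x : ℝ) : heatOp (-v) t x = -heatOp v t x := by
  have hspace : deriv ((-v) t) = -deriv (v t) := by funext y; exact deriv.neg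
  have htime : deriv (fun τ => (-v) τ x) t = -deriv (fun τ => v τ x) t := deriv.fun_neg
  rw [heatOp, heatOp, hspace, htime, deriv.neg]
  ring

namespace ParabolicRegular

lemma neg (hv : ParabolicRegular a b s t₁ v) : ParabolicRegular a b s t₁ (-v) where
  continuousOn := hv.continuousOn.neg
  left_eq t ht := congrArg Neg.neg (hv.left_eq t ht)
  right_eq t ht := congrArg Neg.neg (hv.right_eq t ht)
  differentiableAt_time t ht x hx := (hv.differentiableAt_time t ht x hx).fun_neg
  differentiableAt_space t ht x hx := (hv.differentiableAt_space t ht x hx).neg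
  differentiableAt_deriv t ht x hx := by
    have hderiv : deriv ((-v) t) = -deriv (v t) := by funext y; exact deriv.neg
    exact hderiv ▸ (hv.differentiableAt_deriv t ht x hx).neg

lemma deriv_sub_eventuallyEq (hv : ParabolicRegular a b s t₁ v)
    (hw : ParabolicRegular a b s t₁ w) {t x : ℝ} (ht : t ∈ Ioc s t₁) (hx : x ∈ Ioo a b) :
    deriv ((v - w) t) =ᶠ[𝓝 x] deriv (v t) - deriv (w t) := by
  filter_upwards [Ioo_mem_nhds hx.1 hx.2] with y hy
  exact deriv_sub (hv.differentiableAt_space t ht y hy) (hw.differentiableAt_space t ht y hy)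

lemma sub (hv : ParabolicRegular a b s t₁ v) (hw : ParabolicRegular a b s t₁ w) :
    ParabolicRegular a b s t₁ (v - w) where
  continuousOn := hv.continuousOn.sub hw.continuousOn
  left_eq t ht := congrArg₂ (· - ·) (hv.left_eq t ht) (hw.left_eq t ht)
  right_eq t ht := congrArg₂ (· - ·) (hv.right_eq t ht) (hw.right_eq t ht)
  differentiableAt_time t ht x hx :=
    (hv.differentiableAt_time t ht x hx).fun_sub (hw.differentiableAt_time t ht x hx)
  differentiableAt_space t ht x hx :=
    (hv.differentiableAt_space t ht x hx).sub (hw.differentiableAt_space t ht x hx)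
  differentiableAt_deriv t ht x hx :=
    (hv.deriv_sub_eventuallyEq hw ht hx).differentiableAt_iff.2 <|
      (hv.differentiableAt_deriv t ht x hx).sub (hw.differentiableAt_deriv t ht x hx)

lemma heatOp_sub (hv : ParabolicRegular a b s t₁ v) (hw : ParabolicRegular a b s t₁ w) {t x : ℝ}
    (ht : t ∈ Ioc s t₁) (hx : x ∈ Ioo a b) :
    heatOp (v - w) t x = heatOp v t x - heatOp w t x := by
  have htime : deriv (fun τ => (v - w) τ x) t
      = deriv (fun τ => v τ x) t - deriv (fun τ => w τ x) t :=
    deriv_fun_sub (hv.differentiableAt_time t ht x hx) (hw.differentiableAt_time t ht x hx)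
  rw [heatOp, htime, (hv.deriv_sub_eventuallyEq hw ht hx).deriv_eq,
    deriv_sub (hv.differentiableAt_deriv t ht x hx) (hw.differentiableAt_deriv t ht x hx),
    heatOp, heatOp]
  ring

lemma timeDeriv_le_of_isLocalMax_sub (hv : ParabolicRegular a b s t₁ v) {t x f φ'' : ℝ}
    {φ φ' : ℝ → ℝ} (ht : t ∈ Ioc s t₁) (hx : x ∈ Ioo a b)
    (hheat : |heatOp v t x| ≤ B * |deriv (v t) x| + f)
    (hφ : ∀ᶠ y in 𝓝 x, HasDerivAt φ (φ' y) y) (hφ' : HasDerivAt φ' φ'' x)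
    (hmax : IsLocalMax (v t - φ) x) :
    deriv (fun τ => v τ x) t ≤ φ'' + B * |φ' x| + f := by
  have hdiff : ∀ᶠ y in 𝓝 x, HasDerivAt (v t - φ) (deriv (v t) y - φ' y) y := by
    filter_upwards [hφ, Ioo_mem_nhds hx.1 hx.2] with y hφy hy
    exact (hv.differentiableAt_space t ht y hy).hasDerivAt.sub hφy
  have hfirst : deriv (v t) x = φ' x :=
    sub_eq_zero.1 (hmax.hasDerivAt_eq_zero hdiff.self_of_nhds)
  have hsecond : deriv (deriv (v t)) x - φ'' ≤ 0 := secondDeriv_nonpos_of_isLocalMax hdiff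
    ((hv.differentiableAt_deriv t ht x hx).hasDerivAt.sub hφ') hmax
  rw [hfirst, heatOp] at hheat
  linarith [le_abs_self (deriv (fun τ => v τ x) t - deriv (deriv (v t)) x)]

lemma exists_timeDeriv_le_of_isLocalMax_sub (hv : ParabolicRegular a b s t₁ v) {t x f φ'' : ℝ}
    {φ φ' : ℝ → ℝ} (ht : t ∈ Ioc s t₁) (hx : x ∈ Icc a b)
    (hheat : x ∈ Ioo a b → |heatOp v t x| ≤ B * |deriv (v t) x| + f)
    (hφ : ∀ᶠ y in 𝓝 x, HasDerivAt φ (φ' y) y) (hφ' : HasDerivAt φ' φ'' x)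
    (hmax : x ∈ Ioo a b → IsLocalMax (v t - φ) x) :
    ∃ p, HasDerivWithinAt (fun τ => v τ x) p (Icc s t₁) t ∧
      (x ∉ Ioo a b ∧ p = 0 ∨ x ∈ Ioo a b ∧ p ≤ φ'' + B * |φ' x| + f) := by
  by_cases hint : x ∈ Ioo a b
  · exact ⟨_, (hv.differentiableAt_time t ht x hint).hasDerivAt.hasDerivWithinAt, .inr
      ⟨hint, hv.timeDeriv_le_of_isLocalMax_sub ht hint (hheat hint) hφ hφ' (hmax hint)⟩⟩
  · have hconst : ∀ τ ∈ Icc s t₁, v τ x = v s x := by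
      have hend : x ∈ ({a, b} : Set ℝ) := Icc_sdiff_Ioo_same (hx.1.trans hx.2) ▸ ⟨hx, hint⟩
      obtain rfl | rfl := hend
      exacts [hv.left_eq, hv.right_eq]
    exact ⟨0, (hasDerivWithinAt_const t _ (v s x)).congr_of_mem hconst (Ioc_subset_Icc_self ht),
      .inl ⟨hint, rfl⟩⟩

lemma exists_isMaxOn_doubled (hv : ParabolicRegular a b s t₁ v)
    (hΦ : StrictBarrier (b - a) s t₁ B F Φ) (hs : s ≤ t₁) (hab : a ≤ b) :
    ∃ t ∈ Icc s t₁, ∃ x ∈ Icc a b, ∃ y ∈ Icc a b, y ≤ x ∧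
      ∀ τ ∈ Icc s t₁, ∀ x' ∈ Icc a b, ∀ y' ∈ Icc a b, y' ≤ x' →
        v τ x' - v τ y' - Φ τ (x' - y') ≤ v t x - v t y - Φ t (x - y) := by
  let D : Set (ℝ × ℝ × ℝ) := (Icc s t₁ ×ˢ Icc a b ×ˢ Icc a b) ∩ {p | p.2.2 ≤ p.2.1}
  have hD : IsCompact D := (isCompact_Icc.prod (isCompact_Icc.prod isCompact_Icc)).inter_right
    (isClosed_le (by fun_prop) (by fun_prop))
  have hne : (s, a, a) ∈ D := ⟨⟨⟨le_rfl, hs⟩, ⟨le_rfl, hab⟩, ⟨le_rfl, hab⟩⟩, le_refl a⟩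
  have hcont : ContinuousOn
      (fun p : ℝ × ℝ × ℝ => v p.1 p.2.1 - v p.1 p.2.2 - Φ p.1 (p.2.1 - p.2.2)) D := by
    refine ((hv.continuousOn.comp (f := fun p : ℝ × ℝ × ℝ => (p.1, p.2.1)) (by fun_prop) ?_).sub
      (hv.continuousOn.comp (f := fun p : ℝ × ℝ × ℝ => (p.1, p.2.2)) (by fun_prop) ?_)).sub
      (hΦ.continuousOn.comp (f := fun p : ℝ × ℝ × ℝ => (p.1, p.2.1 - p.2.2)) (by fun_prop) ?_)
    all_goals rintro ⟨t, x, y⟩ ⟨⟨ht, hx, hy⟩, hyx⟩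
    exacts [⟨ht, hx⟩, ⟨ht, hy⟩, ⟨ht, sub_nonneg.2 hyx, sub_le_sub hx.2 hy.1⟩]
  obtain ⟨⟨t, x, y⟩, ⟨⟨ht, hx, hy⟩, hyx⟩, hmax⟩ := hD.exists_isMaxOn ⟨_, hne⟩ hcont
  exact ⟨t, ht, x, hx, y, hy, hyx, fun τ hτ x' hx' y' hy' hyx' =>
    hmax (a := (τ, x', y')) ⟨⟨hτ, hx', hy'⟩, hyx'⟩⟩

lemma timeDeriv_barrier_le_of_isMaxOn (hv : ParabolicRegular a b s t₁ v)
    {t x y Φt Φrr : ℝ} {Φr : ℝ → ℝ} (ht : t ∈ Ioc s t₁) (hx : x ∈ Icc a b) (hy : y ∈ Icc a b)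
    (hyx : y < x) (hend : x ∈ Ioo a b ∨ y ∈ Ioo a b)
    (hheat : ∀ z ∈ Ioo a b, |heatOp v t z| ≤ B * |deriv (v t) z| + F t)
    (hΦt : HasDerivAt (fun τ => Φ τ (x - y)) Φt t)
    (hΦr : ∀ᶠ r in 𝓝 (x - y), HasDerivAt (Φ t) (Φr r) r) (hΦrr : HasDerivAt Φr Φrr (x - y))
    (hmax : ∀ τ ∈ Icc s t₁, ∀ x' ∈ Icc a b, ∀ y' ∈ Icc a b, y' ≤ x' →
      v τ x' - v τ y' - Φ τ (x' - y') ≤ v t x - v t y - Φ t (x - y)) :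
    ∃ k ∈ Icc (1 : ℝ) 2, Φt ≤ k * (Φrr + B * |Φr (x - y)| + F t) := by
  have htc : t ∈ Icc s t₁ := Ioc_subset_Icc_self ht
  have hx_tendsto : Tendsto (fun z => z - y) (𝓝 x) (𝓝 (x - y)) := tendsto_id.sub_const y
  have hy_tendsto : Tendsto (fun z => x - z) (𝓝 y) (𝓝 (x - y)) := tendsto_id.const_sub x
  obtain ⟨p, hp, hp_le⟩ := hv.exists_timeDeriv_le_of_isLocalMax_sub (f := F t)
    (φ := fun z => Φ t (z - y)) (φ' := fun z => Φr (z - y)) ht hx (hheat x)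
    ((hx_tendsto.eventually hΦr).mono fun z hz => hz.comp_sub_const z y)
    (hΦrr.comp_sub_const x y) fun hint => by
      filter_upwards [Ioo_mem_nhds hint.1 hint.2, lt_mem_nhds hyx] with z hz hyz
      simp only [Pi.sub_apply]
      linarith [hmax t htc z (Ioo_subset_Icc_self hz) y hy hyz.le]
  obtain ⟨q, hq, hq_le⟩ := hv.neg.exists_timeDeriv_le_of_isLocalMax_sub (B := B) (f := F t)
    (φ := fun z => Φ t (x - z)) (φ' := fun z => -Φr (x - z)) (φ'' := Φrr) ht hy
    (fun hint => by
      have hderiv : deriv ((-v) t) y = -deriv (v t) y := deriv.neg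
      simpa only [heatOp_neg, hderiv, abs_neg] using hheat y hint)
    ((hy_tendsto.eventually hΦr).mono fun z hz => hz.comp_const_sub x z)
    (by simpa using (hΦrr.comp_const_sub x y).fun_neg) fun hint => by
      filter_upwards [Ioo_mem_nhds hint.1 hint.2, gt_mem_nhds hyx] with z hz hzx
      simp only [Pi.sub_apply, Pi.neg_apply]
      linarith [hmax t htc x hx z (Ioo_subset_Icc_self hz) hzx.le]
  rw [abs_neg] at hq_le
  have htime : 0 ≤ p + q - Φt := by
    refine deriv_nonneg_of_isMaxOn_Icc ht ((hp.fun_add hq).fun_sub hΦt.hasDerivWithinAt) ?_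
    intro τ hτ
    simpa only [mem_ofPred_eq, Pi.neg_apply, ← sub_eq_add_neg] using hmax τ hτ x hx y hy hyx.le
  obtain ⟨hxb, rfl⟩ | ⟨-, hp_le⟩ := hp_le <;> obtain ⟨hyb, rfl⟩ | ⟨-, hq_le⟩ := hq_le
  · exact absurd hend (not_or.2 ⟨hxb, hyb⟩)
  · exact ⟨1, by norm_num, by linarith⟩
  · exact ⟨1, by norm_num, by linarith⟩
  · exact ⟨2, by norm_num, by linarith⟩

theorem sub_le_of_strictBarrier (hv : ParabolicRegular a b s t₁ v)
    (hΦ : StrictBarrier (b - a) s t₁ B F Φ)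
    (hheat : ∀ t ∈ Ioc s t₁, ∀ x ∈ Ioo a b, |heatOp v t x| ≤ B * |deriv (v t) x| + F t)
    (hinit : ∀ x ∈ Icc a b, ∀ y ∈ Icc a b, y ≤ x → v s x - v s y ≤ Φ s (x - y))
    (hcorner : ∀ t ∈ Icc s t₁, v s b - v s a ≤ Φ t (b - a)) {t x y : ℝ} (ht : t ∈ Icc s t₁)
    (hx : x ∈ Icc a b) (hy : y ∈ Icc a b) (hyx : y ≤ x) : v t x - v t y ≤ Φ t (x - y) := by
  by_contra! hcon
  obtain ⟨t₀, ht₀, x₀, hx₀, y₀, hy₀, hyx₀, hmax⟩ :=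
    hv.exists_isMaxOn_doubled hΦ (ht.1.trans ht.2) (hx.1.trans hx.2)
  have hpos : 0 < v t₀ x₀ - v t₀ y₀ - Φ t₀ (x₀ - y₀) :=
    (sub_pos.2 hcon).trans_le (hmax t ht x hx y hy hyx)
  have hst₀ : s < t₀ := ht₀.1.lt_of_ne fun h => by
    subst h; linarith [hinit x₀ hx₀ y₀ hy₀ hyx₀]
  have hlt : y₀ < x₀ := hyx₀.lt_of_ne fun h => by
    subst h; rw [sub_self, sub_self] at hpos; linarith [hΦ.zero_nonneg t₀ ht₀]
  have hend : x₀ ∈ Ioo a b ∨ y₀ ∈ Ioo a b := by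
    by_contra! hnot
    have hxb : x₀ = b := hx₀.2.eq_of_not_lt fun h => hnot.1 ⟨hy₀.1.trans_lt hlt, h⟩
    have hya : y₀ = a := (hy₀.1.eq_of_not_lt fun h => hnot.2 ⟨h, hlt.trans_le hx₀.2⟩).symm
    subst hxb hya
    linarith [hcorner t₀ ht₀, hv.left_eq t₀ ht₀, hv.right_eq t₀ ht₀]
  have hr : x₀ - y₀ ∈ Ioo 0 (b - a) := by
    refine ⟨sub_pos.2 hlt, ?_⟩
    rcases hend with h | h <;> linarith [h.1, h.2, hx₀.2, hy₀.1]
  obtain ⟨Φt, Φr, Φrr, hΦt, hΦr, hΦrr, hstrict⟩ := hΦ.strict t₀ ⟨hst₀, ht₀.2⟩ _ hr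
  obtain ⟨k, hk, hle⟩ := hv.timeDeriv_barrier_le_of_isMaxOn ⟨hst₀, ht₀.2⟩ hx₀ hy₀ hlt hend
    (hheat t₀ ⟨hst₀, ht₀.2⟩) hΦt hΦr hΦrr hmax
  exact (hstrict k hk).not_ge hle

end ParabolicRegular

end MaximumPrinciple

/-- `g` has oscillation at most `A` and Lipschitz constant at most `A / σ` on `S`. This is the shape
of the parabolic smoothing estimates below, in which `σ` is the square root of the elapsed time. -/
def OscLip (S : Set ℝ) (A σ : ℝ) (g : ℝ → ℝ) : Prop :=
  ∀ x ∈ S, ∀ y ∈ S, |g x - g y| ≤ A * min 1 (|x - y| / σ)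

namespace OscLip

variable {S : Set ℝ} {A A' σ σ' : ℝ} {g h : ℝ → ℝ}

lemma mono (hg : OscLip S A σ g) (hA : A ≤ A') (hA' : 0 ≤ A') (hσ' : 0 < σ') (hσ : σ' ≤ σ) :
    OscLip S A' σ' g := fun x hx y hy => by
  have hmin : 0 ≤ min 1 (|x - y| / σ) := by have := hσ'.trans_le hσ; positivity
  calc |g x - g y| ≤ A * min 1 (|x - y| / σ) := hg x hx y hy
    _ ≤ A' * min 1 (|x - y| / σ) := by gcongr
    _ ≤ A' * min 1 (|x - y| / σ') := by gcongr

lemma rescale (hg : OscLip S A σ g) (hA : 0 ≤ A) (hσ : 0 < σ) (hσσ' : σ ≤ σ') :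
    OscLip S (A * (σ' / σ)) σ' g := fun x hx y hy => by
  have hσ' : 0 < σ' := hσ.trans_le hσσ'
  calc |g x - g y| ≤ A * min 1 (|x - y| / σ) := hg x hx y hy
    _ ≤ A * min (σ' / σ) (|x - y| / σ) := by gcongr; exact (one_le_div hσ).2 hσσ'
    _ = A * min (σ' / σ * 1) (σ' / σ * (|x - y| / σ')) := by congr 2 <;> field_simp
    _ = A * (σ' / σ) * min 1 (|x - y| / σ') := by
      rw [← mul_min_of_nonneg _ _ (by positivity), mul_assoc]

lemma sub (hg : OscLip S A σ g) (hh : OscLip S A' σ h) : OscLip S (A + A') σ (g - h) :=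
  fun x hx y hy => calc
    |(g - h) x - (g - h) y| = |(g x - g y) - (h x - h y)| := by simp only [Pi.sub_apply]; ring_nf
    _ ≤ |g x - g y| + |h x - h y| := abs_sub _ _
    _ ≤ (A + A') * min 1 (|x - y| / σ) := by linarith [hg x hx y hy, hh x hx y hy]

lemma abs_sub_le_osc (hg : OscLip S A σ g) (hA : 0 ≤ A) {x y : ℝ} (hx : x ∈ S) (hy : y ∈ S) :
    |g x - g y| ≤ A :=
  (hg x hx y hy).trans (mul_le_of_le_one_right hA (min_le_left _ _))

lemma abs_sub_le_lip (hg : OscLip S A σ g) (hA : 0 ≤ A) {x y : ℝ} (hx : x ∈ S) (hy : y ∈ S) :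
    |g x - g y| ≤ A / σ * |x - y| :=
  (hg x hx y hy).trans <| (mul_le_mul_of_nonneg_left (min_le_right _ _) hA).trans_eq <| by ring

lemma abs_deriv_le (hg : OscLip S A σ g) (hA : 0 ≤ A) (hσ : 0 ≤ σ) {x : ℝ} (hx : S ∈ 𝓝 x) :
    |deriv g x| ≤ A / σ :=
  norm_deriv_le_of_lip' (f := g) (div_nonneg hA hσ) <| eventually_of_mem hx fun _ hy =>
    hg.abs_sub_le_lip hA hy (mem_of_mem_nhds hx)

end OscLip

/-- The profile of the barriers. It increases from `0` to `1` on `[0, ∞)` and is concave enough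
there to absorb both the time derivative of the scaling `r / √t` and a bounded drift. -/
def profile (a : ℝ) : ℝ := 1 - Real.exp (-(a ^ 2 + 2 * a))

/-- The derivative of `profile`. -/
def profileDeriv (a : ℝ) : ℝ := 2 * (a + 1) * Real.exp (-(a ^ 2 + 2 * a))

/-- The second derivative of `profile`. -/
def profileDeriv₂ (a : ℝ) : ℝ := (2 - 4 * (a + 1) ^ 2) * Real.exp (-(a ^ 2 + 2 * a))

section Profile

variable {a : ℝ}

lemma continuous_profile : Continuous profile := by unfold profile; fun_prop

lemma hasDerivAt_exp_neg_sq_add (a : ℝ) : HasDerivAt (fun x => Real.exp (-(x ^ 2 + 2 * x)))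
    (-(2 * (a + 1)) * Real.exp (-(a ^ 2 + 2 * a))) a := by
  refine (((hasDerivAt_pow 2 a).add ((hasDerivAt_id a).const_mul 2)).fun_neg.exp).congr_deriv ?_
  simp only [Pi.add_apply, id_eq]
  ring

lemma hasDerivAt_profile (a : ℝ) : HasDerivAt profile (profileDeriv a) a :=
  ((hasDerivAt_exp_neg_sq_add a).const_sub 1).congr_deriv (by rw [profileDeriv]; ring)

lemma hasDerivAt_profileDeriv (a : ℝ) : HasDerivAt profileDeriv (profileDeriv₂ a) a := by
  refine ((((hasDerivAt_id a).add_const 1).const_mul 2).mul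
    (hasDerivAt_exp_neg_sq_add a)).congr_deriv ?_
  simp only [id_eq, profileDeriv₂]
  ring

lemma abs_profile_le (a : ℝ) : |profile a| ≤ 2 := by
  have hexp : Real.exp (-(a ^ 2 + 2 * a)) ≤ Real.exp 1 :=
    Real.exp_le_exp.2 (by nlinarith [sq_nonneg (a + 1)])
  rw [profile, abs_le]
  constructor <;> linarith [Real.exp_pos (-(a ^ 2 + 2 * a)), Real.exp_one_lt_d9]

lemma profile_zero : profile 0 = 0 := by simp [profile]

lemma profileDeriv_nonneg (ha : 0 ≤ a) : 0 ≤ profileDeriv a := by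
  unfold profileDeriv; positivity

lemma half_min_le_profile (ha : 0 ≤ a) : 1 / 2 * min 1 a ≤ profile a := by
  have hexp : (1 + a) * Real.exp (-(a ^ 2 + 2 * a)) ≤ 1 := calc
    (1 + a) * Real.exp (-(a ^ 2 + 2 * a)) ≤ Real.exp a * Real.exp (-(a ^ 2 + 2 * a)) := by
      gcongr; linarith [Real.add_one_le_exp a]
    _ = Real.exp (-(a ^ 2 + a)) := by rw [← Real.exp_add]; ring_nf
    _ ≤ 1 := Real.exp_le_one_iff.2 (by nlinarith)
  have hmin : 1 / 2 * min 1 a * (1 + a) ≤ a := by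
    rcases le_total 1 a with h | h
    · rw [min_eq_left h]; linarith
    · rw [min_eq_right h]; nlinarith
  rw [profile]
  nlinarith

lemma profile_nonneg (ha : 0 ≤ a) : 0 ≤ profile a :=
  le_trans (by positivity) (half_min_le_profile ha)

lemma profile_le_one (a : ℝ) : profile a ≤ 1 := sub_le_self _ (Real.exp_pos _).le

lemma profile_le_two_mul (ha : 0 ≤ a) : profile a ≤ 2 * a := by
  rcases le_total 1 a with h | h
  · linarith [profile_le_one a]
  have hexp : (1 - a) ^ 2 * (1 - a ^ 2) ≤ Real.exp (-(a ^ 2 + 2 * a)) := calc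
    (1 - a) ^ 2 * (1 - a ^ 2) ≤ Real.exp (-a) ^ 2 * Real.exp (-a ^ 2) := by
      gcongr
      · nlinarith
      · exact Real.one_sub_le_exp_neg a
      · exact Real.one_sub_le_exp_neg (a ^ 2)
    _ = Real.exp (-(a ^ 2 + 2 * a)) := by
      rw [← Real.exp_nat_mul, ← Real.exp_add]; push_cast; ring_nf
  have hcube : 0 ≤ a ^ 3 * (2 - a) := mul_nonneg (by positivity) (by linarith)
  rw [profile]
  nlinarith

lemma profile_le_two_mul_min (ha : 0 ≤ a) : profile a ≤ 2 * min 1 a := by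
  rcases le_total 1 a with h | h
  · rw [min_eq_left h]; linarith [profile_le_one a]
  · rw [min_eq_right h]; exact profile_le_two_mul ha

lemma profile_supersolution {κ k : ℝ} (ha : 0 ≤ a) (hκ : κ ≤ 1 / 2) (hk : 1 ≤ k) :
    Real.exp (-(a ^ 2 + 2 * a)) ≤
      -(a * profileDeriv a + 2 * k * (profileDeriv₂ a + κ * profileDeriv a)) := by
  have hdrift : k * (κ * (2 * (a + 1))) ≤ k * (1 / 2 * (2 * (a + 1))) := by gcongr
  have hpoly : 1 ≤ -(a * (2 * (a + 1)) +
      2 * k * ((2 - 4 * (a + 1) ^ 2) + κ * (2 * (a + 1)))) := by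
    nlinarith [mul_nonneg ha (sub_nonneg.2 hk), mul_nonneg (sq_nonneg a) (sub_nonneg.2 hk)]
  calc Real.exp (-(a ^ 2 + 2 * a)) = 1 * Real.exp (-(a ^ 2 + 2 * a)) := (one_mul _).symm
    _ ≤ -(a * (2 * (a + 1)) + 2 * k * ((2 - 4 * (a + 1) ^ 2) + κ * (2 * (a + 1)))) *
          Real.exp (-(a ^ 2 + 2 * a)) := by gcongr
    _ = _ := by rw [profileDeriv, profileDeriv₂]; ring

lemma profile_supersolution_strict {κ k : ℝ} (ha : 0 ≤ a) (hκ : κ ≤ 1 / 2) (hk : 1 ≤ k) :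
    a * profileDeriv a + 2 * k * (profileDeriv₂ a + κ * profileDeriv a) < 0 := by
  linarith [profile_supersolution ha hκ hk, Real.exp_pos (-(a ^ 2 + 2 * a))]

lemma profile_supersolution_source {κ k : ℝ} (ha : 0 ≤ a) (hκ : κ ≤ 1 / 2)
    (hk : k ∈ Icc (1 : ℝ) 2) :
    k / 2 ≤ profile a - a * profileDeriv a - 2 * k * (profileDeriv₂ a + κ * profileDeriv a) := by
  have hsum : profile a = 1 - Real.exp (-(a ^ 2 + 2 * a)) := rfl
  linarith [profile_supersolution ha hκ hk.1, hk.2]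

end Profile

/-- The barrier for increments with initial oscillation `K` at scale `√(s - s₀)` and a source of
size `F / √(t - s)`. The virtual starting time `s₀ < s` encodes the initial Lipschitz bound. -/
def heatBarrier (K F s₀ s t r : ℝ) : ℝ :=
  2 * K * profile (r / √(t - s₀)) + 4 * F * (√(t - s) * profile (r / √(t - s)))

section Barrier

lemma continuous_mul_comp_div {g : ℝ → ℝ} {M : ℝ} (hg : Continuous g) (hM : ∀ x, |g x| ≤ M) :
    Continuous fun p : ℝ × ℝ => p.1 * g (p.2 / p.1) := by
  refine continuous_iff_continuousAt.2 fun ⟨σ, r⟩ => ?_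
  rcases eq_or_ne σ 0 with rfl | hσ
  · have hbound : IsBoundedUnder (· ≤ ·) (𝓝 ((0 : ℝ), r))
        (norm ∘ fun p : ℝ × ℝ => g (p.2 / p.1)) :=
      isBoundedUnder_of ⟨M, fun p => hM _⟩
    have hlim : Tendsto (fun p : ℝ × ℝ => p.1) (𝓝 (0, r)) (𝓝 0) := continuous_fst.tendsto _
    simpa [ContinuousAt] using hlim.zero_mul_isBoundedUnder_le hbound
  · exact continuousAt_fst.mul (hg.continuousAt.comp (continuousAt_snd.div continuousAt_fst hσ))

variable {K F s₀ s t t₁ r ℓ B : ℝ}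

lemma hasDerivAt_sqrt_sub (ht : s < t) : HasDerivAt (fun τ => √(τ - s)) (1 / (2 * √(t - s))) t := by
  simpa using ((hasDerivAt_id t).sub_const s).sqrt (sub_pos.2 ht).ne'

lemma hasDerivAt_profile_div_sqrt_time (r : ℝ) (ht : s < t) :
    HasDerivAt (fun τ => profile (r / √(τ - s)))
      (-(r / √(t - s) * profileDeriv (r / √(t - s)) / (2 * √(t - s) ^ 2))) t := by
  have hpos : 0 < √(t - s) := Real.sqrt_pos.2 (sub_pos.2 ht)
  refine ((hasDerivAt_profile (r / √(t - s))).comp t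
    ((hasDerivAt_const t r).fun_div (hasDerivAt_sqrt_sub ht) hpos.ne')).congr_deriv ?_
  field_simp
  ring

lemma hasDerivAt_profile_div_space (r c : ℝ) :
    HasDerivAt (fun r => profile (r / c)) (profileDeriv (r / c) / c) r :=
  ((hasDerivAt_profile _).comp r ((hasDerivAt_id r).div_const c)).congr_deriv (mul_one_div _ _)

lemma hasDerivAt_profileDeriv_div_space (r c : ℝ) :
    HasDerivAt (fun r => profileDeriv (r / c)) (profileDeriv₂ (r / c) / c) r :=
  ((hasDerivAt_profileDeriv _).comp r ((hasDerivAt_id r).div_const c)).congr_deriv (mul_one_div _ _)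

lemma hasDerivAt_heatBarrier_time (K F r : ℝ) (hs₀ : s₀ ≤ s) (ht : s < t) :
    HasDerivAt (fun τ => heatBarrier K F s₀ s τ r)
      (-(K * (r / √(t - s₀) * profileDeriv (r / √(t - s₀))) / √(t - s₀) ^ 2) +
        2 * F * (profile (r / √(t - s)) - r / √(t - s) * profileDeriv (r / √(t - s))) /
          √(t - s)) t := by
  have hq : 0 < √(t - s) := Real.sqrt_pos.2 (sub_pos.2 ht)
  have hp : 0 < √(t - s₀) := Real.sqrt_pos.2 (by linarith)
  refine (((hasDerivAt_profile_div_sqrt_time r (hs₀.trans_lt ht)).const_mul (2 * K)).add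
    (((hasDerivAt_sqrt_sub ht).mul (hasDerivAt_profile_div_sqrt_time r ht)).const_mul
      (4 * F))).congr_deriv ?_
  field_simp
  ring

lemma hasDerivAt_heatBarrier_space (K F s₀ r : ℝ) (ht : s < t) :
    HasDerivAt (heatBarrier K F s₀ s t)
      (2 * K * (profileDeriv (r / √(t - s₀)) / √(t - s₀)) +
        4 * F * profileDeriv (r / √(t - s))) r := by
  have hq : 0 < √(t - s) := Real.sqrt_pos.2 (sub_pos.2 ht)
  refine (((hasDerivAt_profile_div_space r _).const_mul _).add
    (((hasDerivAt_profile_div_space r _).const_mul _).const_mul _)).congr_deriv ?_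
  field_simp

lemma hasDerivAt_heatBarrier_space₂ (K F s₀ s t r : ℝ) :
    HasDerivAt (fun r => 2 * K * (profileDeriv (r / √(t - s₀)) / √(t - s₀)) +
        4 * F * profileDeriv (r / √(t - s)))
      (2 * K * (profileDeriv₂ (r / √(t - s₀)) / √(t - s₀) / √(t - s₀)) +
        4 * F * (profileDeriv₂ (r / √(t - s)) / √(t - s))) r :=
  (((hasDerivAt_profileDeriv_div_space r _).div_const _).const_mul _).add
    ((hasDerivAt_profileDeriv_div_space r _).const_mul _)

lemma continuousOn_heatBarrier (K F : ℝ) (hs₀ : s₀ < s) :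
    ContinuousOn (Function.uncurry (heatBarrier K F s₀ s)) (Icc s t₁ ×ˢ Icc 0 ℓ) := by
  have hsource : Continuous fun p : ℝ × ℝ => √(p.1 - s) * profile (p.2 / √(p.1 - s)) :=
    (continuous_mul_comp_div continuous_profile abs_profile_le).comp
      (f := fun p : ℝ × ℝ => (√(p.1 - s), p.2)) (by fun_prop)
  have hinitial : ContinuousOn (fun p : ℝ × ℝ => profile (p.2 / √(p.1 - s₀)))
      (Icc s t₁ ×ˢ Icc 0 ℓ) := by
    refine continuous_profile.comp_continuousOn (continuousOn_snd.div (by fun_prop) ?_)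
    rintro ⟨t, r⟩ ⟨ht, -⟩
    exact (Real.sqrt_pos.2 (by linarith [ht.1])).ne'
  exact (hinitial.const_mul _).add (hsource.const_mul _).continuousOn

lemma heatBarrier_supersolution {p q k : ℝ} (hK : 0 < K) (hF : 0 ≤ F) (hp : 0 < p) (hq : 0 < q)
    (hr : 0 ≤ r) (hBp : B * p ≤ 1 / 2) (hBq : B * q ≤ 1 / 2) (hk : k ∈ Icc (1 : ℝ) 2) :
    k * (2 * K * (profileDeriv₂ (r / p) / p / p) + 4 * F * (profileDeriv₂ (r / q) / q) +
        B * (2 * K * (profileDeriv (r / p) / p) + 4 * F * profileDeriv (r / q)) + F / q) <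
      -(K * (r / p * profileDeriv (r / p)) / p ^ 2) +
        2 * F * (profile (r / q) - r / q * profileDeriv (r / q)) / q := by
  have hinitial := profile_supersolution_strict (div_nonneg hr hp.le) hBp hk.1
  have hsource := profile_supersolution_source (div_nonneg hr hq.le) hBq hk
  generalize profile (r / q) = ψβ at *
  generalize profileDeriv (r / q) = ψβ' at *
  generalize profileDeriv₂ (r / q) = ψβ'' at *
  generalize profileDeriv (r / p) = ψα' at *
  generalize profileDeriv₂ (r / p) = ψα'' at *
  have hsplit : -(K * (r / p * ψα') / p ^ 2) + 2 * F * (ψβ - r / q * ψβ') / q -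
      k * (2 * K * (ψα'' / p / p) + 4 * F * (ψβ'' / q) +
        B * (2 * K * (ψα' / p) + 4 * F * ψβ') + F / q) =
      K / p ^ 2 * -(r / p * ψα' + 2 * k * (ψα'' + B * p * ψα')) +
      2 * F / q * (ψβ - r / q * ψβ' - 2 * k * (ψβ'' + B * q * ψβ') - k / 2) := by
    field_simp
    ring
  rw [← sub_pos, hsplit]
  exact add_pos_of_pos_of_nonneg (mul_pos (by positivity) (by linarith))
    (mul_nonneg (by positivity) (by linarith))

lemma strictBarrier_heatBarrier (hK : 0 < K) (hF : 0 ≤ F) (hB : 0 ≤ B) (hs₀ : s₀ < s)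
    (hdrift : B * √(t₁ - s₀) ≤ 1 / 2) :
    StrictBarrier ℓ s t₁ B (fun t => F / √(t - s)) (heatBarrier K F s₀ s) where
  continuousOn := continuousOn_heatBarrier K F hs₀
  zero_nonneg t _ := by simp [heatBarrier, profile_zero]
  strict t ht r hr := by
    refine ⟨_, _, _, hasDerivAt_heatBarrier_time K F r hs₀.le ht.1,
      .of_forall fun r' => hasDerivAt_heatBarrier_space K F s₀ r' ht.1,
      hasDerivAt_heatBarrier_space₂ K F s₀ s t r, fun k hk => ?_⟩
    have hp : 0 < √(t - s₀) := Real.sqrt_pos.2 (by linarith [ht.1])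
    have hq : 0 < √(t - s) := Real.sqrt_pos.2 (sub_pos.2 ht.1)
    have hp_le : √(t - s₀) ≤ √(t₁ - s₀) := Real.sqrt_le_sqrt (by linarith [ht.2])
    have hq_le : √(t - s) ≤ √(t₁ - s₀) := Real.sqrt_le_sqrt (by linarith [ht.2])
    have hψα := profileDeriv_nonneg (div_nonneg hr.1.le hp.le)
    have hψβ := profileDeriv_nonneg (div_nonneg hr.1.le hq.le)
    rw [abs_of_nonneg (by positivity)]
    exact heatBarrier_supersolution hK hF hp hq hr.1.le
      ((mul_le_mul_of_nonneg_left hp_le hB).trans hdrift)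
      ((mul_le_mul_of_nonneg_left hq_le hB).trans hdrift) hk

lemma le_heatBarrier_of_le_min (hK : 0 ≤ K) (hF : 0 ≤ F) (hr : 0 ≤ r) :
    K * min 1 (r / √(t - s₀)) ≤ heatBarrier K F s₀ s t r := by
  have hinitial := half_min_le_profile (a := r / √(t - s₀)) (by positivity)
  have hsource := profile_nonneg (a := r / √(t - s)) (by positivity)
  calc K * min 1 (r / √(t - s₀)) = 2 * K * (1 / 2 * min 1 (r / √(t - s₀))) := by ring
    _ ≤ 2 * K * profile (r / √(t - s₀)) := by gcongr
    _ ≤ heatBarrier K F s₀ s t r := le_add_of_nonneg_right (by positivity)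

lemma heatBarrier_le_min (hK : 0 ≤ K) (hF : 0 ≤ F) (hs₀ : s₀ ≤ s) (ht : s < t) (hr : 0 ≤ r) :
    heatBarrier K F s₀ s t r ≤ (4 * K + 8 * F * √(t - s)) * min 1 (r / √(t - s)) := by
  have hscale : r / √(t - s₀) ≤ r / √(t - s) :=
    div_le_div_of_nonneg_left hr (Real.sqrt_pos.2 (sub_pos.2 ht)) (by gcongr)
  have hinitial : profile (r / √(t - s₀)) ≤ 2 * min 1 (r / √(t - s)) :=
    (profile_le_two_mul_min (by positivity)).trans (by gcongr)
  have hsource := profile_le_two_mul_min (a := r / √(t - s)) (by positivity)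
  calc heatBarrier K F s₀ s t r
      ≤ 2 * K * (2 * min 1 (r / √(t - s))) +
          4 * F * (√(t - s) * (2 * min 1 (r / √(t - s)))) := by unfold heatBarrier; gcongr
    _ = (4 * K + 8 * F * √(t - s)) * min 1 (r / √(t - s)) := by ring

lemma heatBarrier_le_lip (hK : 0 ≤ K) (hF : 0 ≤ F) (hs₀ : s₀ < s) (ht : s < t) (hr : 0 ≤ r) :
    heatBarrier K F s₀ s t r ≤ (4 * K / √(s - s₀) + 8 * F) * r := by
  have hq : 0 < √(t - s) := Real.sqrt_pos.2 (sub_pos.2 ht)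
  have hp : 0 < √(s - s₀) := Real.sqrt_pos.2 (sub_pos.2 hs₀)
  have hinitial : profile (r / √(t - s₀)) ≤ 2 * (r / √(s - s₀)) :=
    (profile_le_two_mul (by positivity)).trans (by gcongr)
  have hsource := profile_le_two_mul (a := r / √(t - s)) (by positivity)
  calc heatBarrier K F s₀ s t r
      ≤ 2 * K * (2 * (r / √(s - s₀))) + 4 * F * (√(t - s) * (2 * (r / √(t - s)))) := by
        unfold heatBarrier; gcongr
    _ = (4 * K / √(s - s₀) + 8 * F) * r := by field_simp; ring

end Barrier

section SmoothingEstimates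

variable {a b s₀ s t₁ K B : ℝ} {v : ℝ → ℝ → ℝ}

namespace ParabolicRegular

lemma sub_le_heatBarrier {F : ℝ} (hv : ParabolicRegular a b s t₁ v) (hK : 0 < K) (hF : 0 ≤ F)
    (hB : 0 ≤ B) (hs₀ : s₀ < s) (hlength : √(t₁ - s₀) ≤ b - a)
    (hdrift : B * √(t₁ - s₀) ≤ 1 / 2) (hinit : OscLip (Icc a b) K √(s - s₀) (v s))
    (hheat : ∀ t ∈ Ioc s t₁, ∀ x ∈ Ioo a b,
      |heatOp v t x| ≤ B * |deriv (v t) x| + F / √(t - s))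
    {t x y : ℝ} (ht : t ∈ Icc s t₁) (hx : x ∈ Icc a b) (hy : y ∈ Icc a b) (hyx : y ≤ x) :
    v t x - v t y ≤ heatBarrier K F s₀ s t (x - y) := by
  refine hv.sub_le_of_strictBarrier
    (strictBarrier_heatBarrier hK hF hB hs₀ hdrift) hheat ?_ ?_ ht hx hy hyx
  · intro x hx y hy hyx
    calc v s x - v s y ≤ K * min 1 (|x - y| / √(s - s₀)) := (le_abs_self _).trans (hinit x hx y hy)
      _ = K * min 1 ((x - y) / √(s - s₀)) := by rw [abs_of_nonneg (sub_nonneg.2 hyx)]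
      _ ≤ heatBarrier K F s₀ s s (x - y) := le_heatBarrier_of_le_min hK.le hF (sub_nonneg.2 hyx)
  · intro τ hτ
    have hab : a ≤ b := hx.1.trans hx.2
    have hp : 0 < √(τ - s₀) := Real.sqrt_pos.2 (by linarith [hτ.1])
    have hp_le : √(τ - s₀) ≤ b - a :=
      (Real.sqrt_le_sqrt (by linarith [hτ.2])).trans hlength
    calc v s b - v s a ≤ K := (le_abs_self _).trans
          (hinit.abs_sub_le_osc hK.le (right_mem_Icc.2 hab) (left_mem_Icc.2 hab))
      _ = K * min 1 ((b - a) / √(τ - s₀)) := by rw [min_eq_left ((one_le_div hp).2 hp_le), mul_one]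
      _ ≤ heatBarrier K F s₀ s τ (b - a) := le_heatBarrier_of_le_min hK.le hF (sub_nonneg.2 hab)

theorem abs_sub_le_heatBarrier {F : ℝ} (hv : ParabolicRegular a b s t₁ v) (hK : 0 < K)
    (hF : 0 ≤ F) (hB : 0 ≤ B) (hs₀ : s₀ < s) (hlength : √(t₁ - s₀) ≤ b - a)
    (hdrift : B * √(t₁ - s₀) ≤ 1 / 2) (hinit : OscLip (Icc a b) K √(s - s₀) (v s))
    (hheat : ∀ t ∈ Ioc s t₁, ∀ x ∈ Ioo a b,
      |heatOp v t x| ≤ B * |deriv (v t) x| + F / √(t - s))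
    {t x y : ℝ} (ht : t ∈ Icc s t₁) (hx : x ∈ Icc a b) (hy : y ∈ Icc a b) :
    |v t x - v t y| ≤ heatBarrier K F s₀ s t |x - y| := by
  wlog hyx : y ≤ x generalizing x y
  · rw [abs_sub_comm, abs_sub_comm x]
    exact this hy hx (le_of_not_ge hyx)
  have hinit_neg : OscLip (Icc a b) K √(s - s₀) ((-v) s) := fun x hx y hy => by
    simpa only [Pi.neg_apply, neg_sub_neg, abs_sub_comm] using hinit y hy x hx
  have hheat_neg : ∀ t ∈ Ioc s t₁, ∀ x ∈ Ioo a b,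
      |heatOp (-v) t x| ≤ B * |deriv ((-v) t) x| + F / √(t - s) := fun t ht x hx => by
    have hderiv : deriv ((-v) t) x = -deriv (v t) x := deriv.neg
    simpa only [heatOp_neg, hderiv, abs_neg] using hheat t ht x hx
  have hupper := hv.sub_le_heatBarrier hK hF hB hs₀ hlength hdrift hinit hheat ht hx hy hyx
  have hlower := hv.neg.sub_le_heatBarrier hK hF hB hs₀ hlength hdrift hinit_neg hheat_neg
    ht hx hy hyx
  simp only [Pi.neg_apply] at hlower
  rw [abs_of_nonneg (sub_nonneg.2 hyx), abs_le]
  constructor <;> linarith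

theorem oscLip_of_heatOp_le {c A₀ : ℝ} (hv : ParabolicRegular a b s t₁ v) (hK : 0 < K)
    (hB : 0 ≤ B) (hc : 0 ≤ c) (hs₀ : s₀ < s) (hlength : √(t₁ - s₀) ≤ b - a)
    (hdrift : B * √(t₁ - s₀) ≤ 1 / 2) (hsource : c * √(t₁ - s₀) ≤ 1 / 16)
    (hinit : OscLip (Icc a b) K √(s - s₀) (v s))
    (hheat : ∀ A, 0 ≤ A → ∀ t ∈ Ioc s t₁, OscLip (Icc a b) A √(t - s) (v t) → ∀ x ∈ Ioo a b,
      |heatOp v t x| ≤ B * |deriv (v t) x| + c * A / √(t - s))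
    (hA₀ : 0 ≤ A₀) (hbdd : ∀ t ∈ Ioc s t₁, OscLip (Icc a b) A₀ √(t - s) (v t)) :
    ∀ t ∈ Ioc s t₁, OscLip (Icc a b) (8 * K) √(t - s) (v t) := by
  have himprove : ∀ A, 0 ≤ A → (∀ t ∈ Ioc s t₁, OscLip (Icc a b) A √(t - s) (v t)) →
      ∀ t ∈ Ioc s t₁, OscLip (Icc a b) (4 * K + A / 2) √(t - s) (v t) := by
    intro A hA hosc t ht x hx y hy
    have hq_le : √(t - s) ≤ √(t₁ - s₀) := Real.sqrt_le_sqrt (by linarith [ht.2])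
    have hsmall : c * √(t - s) ≤ 1 / 16 := (mul_le_mul_of_nonneg_left hq_le hc).trans hsource
    calc |v t x - v t y| ≤ heatBarrier K (c * A) s₀ s t |x - y| :=
          hv.abs_sub_le_heatBarrier hK (mul_nonneg hc hA) hB hs₀ hlength hdrift hinit
            (fun τ hτ => hheat A hA τ hτ (hosc τ hτ)) (Ioc_subset_Icc_self ht) hx hy
      _ ≤ (4 * K + 8 * (c * A) * √(t - s)) * min 1 (|x - y| / √(t - s)) :=
          heatBarrier_le_min hK.le (mul_nonneg hc hA) hs₀.le ht.1 (abs_nonneg _)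
      _ ≤ (4 * K + A / 2) * min 1 (|x - y| / √(t - s)) := by gcongr; nlinarith
  have hiterate : ∀ n : ℕ, ∀ t ∈ Ioc s t₁,
      OscLip (Icc a b) (8 * K + A₀ * (1 / 2) ^ n) √(t - s) (v t) := by
    intro n
    induction n with
    | zero =>
      exact fun t ht => (hbdd t ht).mono (by linarith) (by positivity)
        (Real.sqrt_pos.2 (sub_pos.2 ht.1)) le_rfl
    | succ n ih =>
      have hstep : 8 * K + A₀ * (1 / 2) ^ (n + 1) = 4 * K + (8 * K + A₀ * (1 / 2) ^ n) / 2 := by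
        ring
      exact hstep ▸ himprove _ (by positivity) ih
  intro t ht x hx y hy
  have hpow : Tendsto (fun n : ℕ => A₀ * (1 / 2 : ℝ) ^ n) atTop (𝓝 (A₀ * 0)) :=
    (tendsto_pow_atTop_nhds_zero_of_lt_one (by norm_num) (by norm_num)).const_mul A₀
  have hlim := (hpow.const_add (8 * K)).mul_const (min 1 (|x - y| / √(t - s)))
  rw [mul_zero, add_zero] at hlim
  exact ge_of_tendsto' hlim fun n => hiterate n t ht x hx y hy

end ParabolicRegular

end SmoothingEstimates

/-- The odd (Dirichlet) reflection of `k`, companion of the even reflection `Jneum k`: since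
`∂ᵥ (Jdir k u) = Jneum k' u`, integration by parts turns one into the other. -/
def Jdir (k : ℝ → ℝ) (u v : ℝ) : ℝ := k (v - u) - k (2 - v - u) - k (-2 - v - u)

/-- Convolution on `(-1, 1)` with the Dirichlet kernel `Jdir`. -/
def convDir (k m : ℝ → ℝ) (u : ℝ) : ℝ := ∫ v in (-1 : ℝ)..1, Jdir k u v * m v

section Convolution

variable {k m n : ℝ → ℝ} {C M u : ℝ}

lemma hasDerivAt_integral_kernel_mul {a b : ℝ} {G G' : ℝ → ℝ → ℝ}
    (hG : ∀ u v, HasDerivAt (fun u => G u v) (G' u v) u) (hGc : ∀ u, Continuous (G u))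
    (hGc' : ∀ u, Continuous (G' u)) (hC : ∀ u v, |G' u v| ≤ C)
    (hm : IntervalIntegrable m volume a b) (u : ℝ) :
    HasDerivAt (fun u => ∫ v in a..b, G u v * m v) (∫ v in a..b, G' u v * m v) u := by
  refine (intervalIntegral.hasDerivAt_integral_of_dominated_loc_of_deriv_le (𝕜 := ℝ)
    (s := univ) (bound := fun v => C * |m v|) univ_mem (.of_forall fun u' => ?_)
    (hm.continuousOn_mul (hGc u).continuousOn) ?_ (.of_forall fun v _ u' _ => ?_)
    (hm.abs.const_mul C) (.of_forall fun v _ u' _ => (hG u' v).mul_const (m v))).2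
  · exact (hm.continuousOn_mul (hGc u').continuousOn).aestronglyMeasurable_restrict_uIoc
  · exact (hm.continuousOn_mul (hGc' u).continuousOn).aestronglyMeasurable_restrict_uIoc
  · rw [norm_mul]
    exact mul_le_mul_of_nonneg_right (hC u' v) (norm_nonneg _)

lemma abs_integral_mul_le {a b : ℝ} {G : ℝ → ℝ} (hab : a ≤ b) (hG : ∀ v, |G v| ≤ C)
    (hm : ∀ v ∈ Ioo a b, |m v| ≤ M) : |∫ v in a..b, G v * m v| ≤ C * M * (b - a) := by
  have hC : 0 ≤ C := (abs_nonneg _).trans (hG 0)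
  rw [← abs_of_nonneg (sub_nonneg.2 hab), ← Real.norm_eq_abs (∫ v in a..b, _)]
  refine intervalIntegral.norm_integral_le_of_norm_le_const_ae ?_
  filter_upwards [compl_mem_ae_iff.2 (measure_singleton b)] with v hvb hv
  rw [uIoc_of_le hab] at hv
  rw [norm_mul]
  exact mul_le_mul (hG v) (hm v ⟨hv.1, hv.2.lt_of_ne hvb⟩) (norm_nonneg _) hC

lemma abs_Jneum_le (hk : ∀ x, |k x| ≤ C) (u v : ℝ) : |Jneum k u v| ≤ 3 * C := by
  refine (abs_add_three _ _ _).trans ?_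
  linarith [hk (v - u), hk (2 - v - u), hk (-2 - v - u)]

lemma abs_Jdir_le (hk : ∀ x, |k x| ≤ C) (u v : ℝ) : |Jdir k u v| ≤ 3 * C := by
  refine (abs_sub _ _).trans ?_
  linarith [abs_sub (k (v - u)) (k (2 - v - u)), hk (v - u), hk (2 - v - u), hk (-2 - v - u)]

lemma abs_convJ_le (hk : ∀ x, |k x| ≤ C) (hm : ∀ v ∈ Ioo (-1 : ℝ) 1, |m v| ≤ M) (u : ℝ) :
    |convJ k m u| ≤ 6 * C * M :=
  (abs_integral_mul_le (by norm_num) (abs_Jneum_le hk u) hm).trans_eq (by ring)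

lemma abs_convDir_le (hk : ∀ x, |k x| ≤ C) (hm : ∀ v ∈ Ioo (-1 : ℝ) 1, |m v| ≤ M) (u : ℝ) :
    |convDir k m u| ≤ 6 * C * M :=
  (abs_integral_mul_le (by norm_num) (abs_Jdir_le hk u) hm).trans_eq (by ring)

lemma continuous_Jneum (hk : Continuous k) (u : ℝ) : Continuous (Jneum k u) := by
  unfold Jneum; fun_prop

lemma continuous_Jdir (hk : Continuous k) (u : ℝ) : Continuous (Jdir k u) := by
  unfold Jdir; fun_prop

lemma convJ_sub (hk : Continuous k) (hm : IntervalIntegrable m volume (-1) 1)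
    (hn : IntervalIntegrable n volume (-1) 1) (u : ℝ) :
    convJ k (m - n) u = convJ k m u - convJ k n u := by
  simp only [convJ, Pi.sub_apply, mul_sub]
  exact intervalIntegral.integral_sub (hm.continuousOn_mul (continuous_Jneum hk u).continuousOn)
    (hn.continuousOn_mul (continuous_Jneum hk u).continuousOn)

lemma convDir_sub (hk : Continuous k) (hm : IntervalIntegrable m volume (-1) 1)
    (hn : IntervalIntegrable n volume (-1) 1) (u : ℝ) :
    convDir k (m - n) u = convDir k m u - convDir k n u := by
  simp only [convDir, Pi.sub_apply, mul_sub]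
  exact intervalIntegral.integral_sub (hm.continuousOn_mul (continuous_Jdir hk u).continuousOn)
    (hn.continuousOn_mul (continuous_Jdir hk u).continuousOn)

variable {j : ℝ → ℝ}

lemma hasDerivAt_comp_sub (hj : ContDiff ℝ 1 j) (c u : ℝ) :
    HasDerivAt (fun u => j (c - u)) (-deriv j (c - u)) u :=
  (hj.differentiable_one (c - u)).hasDerivAt.comp_const_sub c u

lemma hasDerivAt_Jneum (hj : ContDiff ℝ 1 j) (u v : ℝ) :
    HasDerivAt (fun u => Jneum j u v) (-Jneum (deriv j) u v) u :=
  (((hasDerivAt_comp_sub hj _ u).add (hasDerivAt_comp_sub hj _ u)).add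
    (hasDerivAt_comp_sub hj _ u)).congr_deriv (by rw [Jneum]; ring)

lemma hasDerivAt_Jdir (hj : ContDiff ℝ 1 j) (u v : ℝ) :
    HasDerivAt (fun u => Jdir j u v) (-Jdir (deriv j) u v) u :=
  (((hasDerivAt_comp_sub hj _ u).sub (hasDerivAt_comp_sub hj _ u)).sub
    (hasDerivAt_comp_sub hj _ u)).congr_deriv (by rw [Jdir]; ring)

lemma hasDerivAt_Jdir_right (hj : ContDiff ℝ 1 j) (u v : ℝ) :
    HasDerivAt (Jdir j u) (Jneum (deriv j) u v) v := by
  have hdiff (x : ℝ) : HasDerivAt j (deriv j x) x := (hj.differentiable_one x).hasDerivAt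
  have hreflect (c : ℝ) : HasDerivAt (fun v => j (c - v - u)) (-deriv j (c - v - u)) v := by
    simpa only [sub_right_comm] using hasDerivAt_comp_sub hj (c - u) v
  exact ((((hdiff _).comp_sub_const v u).sub (hreflect 2)).sub (hreflect (-2))).congr_deriv
    (by rw [Jneum]; ring)

lemma exists_abs_deriv_le {R : ℝ} (hj : ContDiff ℝ 1 j) (hsupp : ∀ u, R < |u| → j u = 0) :
    ∃ C, ∀ x, |deriv j x| ≤ C := by
  have hcompact : HasCompactSupport j := HasCompactSupport.intro (isCompact_Icc (a := -R) (b := R))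
    fun x hx => hsupp x (not_le.1 fun h => hx (abs_le.1 h))
  exact (hj.continuous_deriv le_rfl).bounded_above_of_compact_support hcompact.deriv

lemma hasDerivAt_convJ (hj : ContDiff ℝ 1 j) (hC : ∀ x, |deriv j x| ≤ C)
    (hm : IntervalIntegrable m volume (-1) 1) (u : ℝ) :
    HasDerivAt (convJ j m) (-convJ (deriv j) m u) u :=
  (hasDerivAt_integral_kernel_mul (hasDerivAt_Jneum hj) (continuous_Jneum hj.continuous)
    (fun u => (continuous_Jneum (hj.continuous_deriv le_rfl) u).fun_neg)
    (fun u v => (abs_neg _).trans_le (abs_Jneum_le hC u v)) hm u).congr_deriv (by simp [convJ])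

lemma hasDerivAt_convDir (hj : ContDiff ℝ 1 j) (hC : ∀ x, |deriv j x| ≤ C)
    (hm : IntervalIntegrable m volume (-1) 1) (u : ℝ) :
    HasDerivAt (convDir j m) (-convDir (deriv j) m u) u :=
  (hasDerivAt_integral_kernel_mul (hasDerivAt_Jdir hj) (continuous_Jdir hj.continuous)
    (fun u => (continuous_Jdir (hj.continuous_deriv le_rfl) u).fun_neg)
    (fun u v => (abs_neg _).trans_le (abs_Jdir_le hC u v)) hm u).congr_deriv (by simp [convDir])

lemma convDir_deriv_eq_neg_convJ (hj : ContDiff ℝ 1 j) (hsupp : ∀ u, 2 < |u| → j u = 0)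
    (hm : ContinuousOn m (Icc (-1) 1)) (hm' : ∀ x ∈ Ioo (-1 : ℝ) 1, DifferentiableAt ℝ m x)
    (hint : IntervalIntegrable (deriv m) volume (-1) 1) (hu : u ∈ Ioo (-1 : ℝ) 1) :
    convDir j (deriv m) u = -convJ (deriv j) m u := by
  have hright : Jdir j u 1 = 0 := by
    rw [Jdir, hsupp (-2 - 1 - u) (lt_abs.2 (.inr (by linarith [hu.1])))]
    ring_nf
  have hleft : Jdir j u (-1) = 0 := by
    rw [Jdir, hsupp (2 - -1 - u) (lt_abs.2 (.inl (by linarith [hu.2])))]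
    ring_nf
  have hparts := intervalIntegral.integral_mul_deriv_eq_deriv_mul_of_hasDeriv_right (a := -1)
    (b := 1) (continuous_Jdir hj.continuous u).continuousOn
    (by rwa [uIcc_of_le (by norm_num)])
    (fun v _ => (hasDerivAt_Jdir_right hj u v).hasDerivWithinAt)
    (fun v hv => (hm' v (by simpa using hv)).hasDerivAt.hasDerivWithinAt)
    ((continuous_Jneum (hj.continuous_deriv le_rfl) u).intervalIntegrable _ _) hint
  rw [convDir, hparts, hright, hleft, convJ]
  ring

lemma hasDerivAt_deriv_convJ (hj : ContDiff ℝ 1 j) (hsupp : ∀ u, 2 < |u| → j u = 0)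
    (hC : ∀ x, |deriv j x| ≤ C) (hm : ContinuousOn m (Icc (-1) 1))
    (hm' : ∀ x ∈ Ioo (-1 : ℝ) 1, DifferentiableAt ℝ m x)
    (hint : IntervalIntegrable (deriv m) volume (-1) 1) (hu : u ∈ Ioo (-1 : ℝ) 1) :
    HasDerivAt (deriv (convJ j m)) (-convDir (deriv j) (deriv m) u) u := by
  refine (hasDerivAt_convDir hj hC hint u).congr_of_eventuallyEq ?_
  filter_upwards [Ioo_mem_nhds hu.1 hu.2] with x hx
  have hm_int : IntervalIntegrable m volume (-1) 1 :=
    ContinuousOn.intervalIntegrable_of_Icc (by norm_num) hm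
  rw [(hasDerivAt_convJ hj hC hm_int x).deriv, convDir_deriv_eq_neg_convJ hj hsupp hm hm' hint hx]

end Convolution

/-- A `C¹` interaction kernel of range at most `2` whose derivative is bounded by `C`. Range `2` is
what makes the doubly reflected terms of `Jneum` vanish at the far boundary point. -/
structure BoundedKernel (j : ℝ → ℝ) (C : ℝ) : Prop where
  contDiff : ContDiff ℝ 1 j
  eq_zero : ∀ u, 2 < |u| → j u = 0
  abs_deriv_le : ∀ x, |deriv j x| ≤ C

lemma BoundedKernel.nonneg {j : ℝ → ℝ} {C : ℝ} (hk : BoundedKernel j C) : 0 ≤ C :=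
  (abs_nonneg _).trans (hk.abs_deriv_le 0)

/-- The quasilinear lower order term of the equation `∂ₜ ρ - ∂ₓₓ ρ = β (...)`, as a function of the
value `p` and slope `g` of `ρ` and of the nonlocal coefficients `c` and `D`. -/
def nonlocalReaction (p c g D : ℝ) : ℝ := (1 - 2 * p) * c * g + chi p * D

section Reaction

variable {p q : ℝ}

lemma abs_one_sub_two_mul_le (hp : p ∈ Icc (0 : ℝ) 1) : |1 - 2 * p| ≤ 1 :=
  abs_le.2 ⟨by linarith [hp.2], by linarith [hp.1]⟩

lemma abs_chi_le (hp : p ∈ Icc (0 : ℝ) 1) : |chi p| ≤ 1 := by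
  unfold chi
  exact abs_le.2 ⟨by nlinarith [hp.1, hp.2], by nlinarith [hp.1, hp.2]⟩

lemma abs_chi_sub_le (hp : p ∈ Icc (0 : ℝ) 1) (hq : q ∈ Icc (0 : ℝ) 1) :
    |chi p - chi q| ≤ |p - q| :=
  calc |chi p - chi q| = |p - q| * |1 - p - q| := by rw [← abs_mul, chi, chi]; ring_nf
    _ ≤ |p - q| := mul_le_of_le_one_right (abs_nonneg _)
        (abs_le.2 ⟨by linarith [hp.2, hq.2], by linarith [hp.1, hq.1]⟩)

lemma abs_nonlocalReaction_le {c D M L : ℝ} (hp : p ∈ Icc (0 : ℝ) 1) (hc : |c| ≤ M)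
    (hD : |D| ≤ M * L) (g : ℝ) : |nonlocalReaction p c g D| ≤ M * |g| + M * L := by
  have hdrift : |(1 - 2 * p) * c| ≤ M := by
    rw [abs_mul, ← one_mul M]
    exact mul_le_mul (abs_one_sub_two_mul_le hp) hc (abs_nonneg _) zero_le_one
  have hsource : |chi p * D| ≤ M * L := by
    rw [abs_mul, ← one_mul (M * L)]
    exact mul_le_mul (abs_chi_le hp) hD (abs_nonneg _) zero_le_one
  calc |nonlocalReaction p c g D| ≤ |(1 - 2 * p) * c * g| + |chi p * D| := abs_add_le _ _
    _ ≤ M * |g| + M * L := by rw [abs_mul _ g]; gcongr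

lemma abs_nonlocalReaction_sub_le {c c' g g' D D' M A L K : ℝ} (hp : p ∈ Icc (0 : ℝ) 1)
    (hq : q ∈ Icc (0 : ℝ) 1) (hpq : |p - q| ≤ A) (hc : |c| ≤ M) (hc' : |c'| ≤ M)
    (hcc' : |c - c'| ≤ M * A) (hg' : |g'| ≤ K * L) (hD' : |D'| ≤ M * (K * L))
    (hDD' : |D - D'| ≤ M * (A * L)) :
    |nonlocalReaction p c g D - nonlocalReaction q c' g' D'| ≤
      M * |g - g'| + (4 * K + 1) * M * (A * L) := by
  have hM : 0 ≤ M := (abs_nonneg _).trans hc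
  have hA : 0 ≤ A := (abs_nonneg _).trans hpq
  have hslope : |(1 - 2 * p) * c * (g - g') + chi p * (D - D')| ≤ M * |g - g'| + M * (A * L) :=
    abs_nonlocalReaction_le hp hc hDD' _
  have hcoeff : |(1 - 2 * p) * (c - c') - 2 * (p - q) * c'| ≤ 3 * (M * A) :=
    calc |(1 - 2 * p) * (c - c') - 2 * (p - q) * c'|
        ≤ |1 - 2 * p| * |c - c'| + 2 * |p - q| * |c'| := by
          simpa only [abs_mul, abs_two] using
            abs_sub ((1 - 2 * p) * (c - c')) (2 * (p - q) * c')
      _ ≤ 1 * (M * A) + 2 * A * M := by gcongr; exact abs_one_sub_two_mul_le hp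
      _ = 3 * (M * A) := by ring
  calc |nonlocalReaction p c g D - nonlocalReaction q c' g' D'|
      = |((1 - 2 * p) * c * (g - g') + chi p * (D - D')) +
          ((1 - 2 * p) * (c - c') - 2 * (p - q) * c') * g' + (chi p - chi q) * D'| := by
        unfold nonlocalReaction; ring_nf
    _ ≤ (M * |g - g'| + M * (A * L)) + 3 * (M * A) * (K * L) + A * (M * (K * L)) := by
        refine (abs_add_three _ _ _).trans ?_
        rw [abs_mul _ g', abs_mul _ D']
        gcongr
        exact (abs_chi_sub_le hp hq).trans hpq
    _ = M * |g - g'| + (4 * K + 1) * M * (A * L) := by ring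

end Reaction

namespace ClassicalSol

variable {j : ℝ → ℝ} {β ρm ρp T C s t₁ t x : ℝ} {ρ ρ₁ ρ₂ : ℝ → ℝ → ℝ}

lemma continuousOn_space (h : ClassicalSol j β ρm ρp T ρ) (ht : t ∈ Icc 0 T) :
    ContinuousOn (ρ t) (Icc (-1) 1) :=
  h.cont.comp (f := fun x => (t, x)) (by fun_prop) fun _ hx => ⟨ht, hx⟩

lemma continuousOn_time (h : ClassicalSol j β ρm ρp T ρ) (hx : x ∈ Icc (-1 : ℝ) 1) :
    ContinuousOn (fun t => ρ t x) (Icc 0 T) :=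
  h.cont.comp (f := fun t => (t, x)) (by fun_prop) fun _ ht => ⟨ht, hx⟩

lemma abs_le_one (h : ClassicalSol j β ρm ρp T ρ) (ht : t ∈ Icc 0 T) (hx : x ∈ Icc (-1 : ℝ) 1) :
    |ρ t x| ≤ 1 :=
  abs_le.2 ⟨by linarith [(h.range t ht x hx).1], (h.range t ht x hx).2⟩

lemma abs_sub_le_one (h : ClassicalSol j β ρm ρp T ρ) (ht : t ∈ Icc 0 T) {y : ℝ}
    (hx : x ∈ Icc (-1 : ℝ) 1) (hy : y ∈ Icc (-1 : ℝ) 1) : |ρ t x - ρ t y| ≤ 1 := by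
  simpa using abs_sub_le_of_le_of_le (h.range t ht x hx).1 (h.range t ht x hx).2
    (h.range t ht y hy).1 (h.range t ht y hy).2

lemma differentiableAt_space (h : ClassicalSol j β ρm ρp T ρ) (ht : t ∈ Ioo 0 T)
    (hx : x ∈ Ioo (-1 : ℝ) 1) : DifferentiableAt ℝ (ρ t) x :=
  ((h.smooth_u t ht).differentiableOn (by norm_num)).differentiableAt (Ioo_mem_nhds hx.1 hx.2)

lemma differentiableAt_deriv (h : ClassicalSol j β ρm ρp T ρ) (ht : t ∈ Ioo 0 T)
    (hx : x ∈ Ioo (-1 : ℝ) 1) : DifferentiableAt ℝ (deriv (ρ t)) x :=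
  (((h.smooth_u t ht).deriv_of_isOpen (m := 1) isOpen_Ioo (by norm_num)).differentiableOn
    (by norm_num)).differentiableAt (Ioo_mem_nhds hx.1 hx.2)

lemma intervalIntegrable (h : ClassicalSol j β ρm ρp T ρ) (ht : t ∈ Icc 0 T) :
    IntervalIntegrable (ρ t) volume (-1) 1 :=
  (h.continuousOn_space ht).intervalIntegrable_of_Icc (by norm_num)

lemma intervalIntegrable_deriv (h : ClassicalSol j β ρm ρp T ρ) (ht : t ∈ Ioo 0 T) :
    IntervalIntegrable (deriv (ρ t)) volume (-1) 1 := by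
  obtain ⟨g, hg, hg_eq⟩ := h.du_ext t ht
  refine (hg.intervalIntegrable_of_Icc (μ := volume) (by norm_num)).congr_uIoo ?_
  rw [uIoo_of_le (by norm_num)]
  exact hg_eq

lemma parabolicRegular (h : ClassicalSol j β ρm ρp T ρ) (hs : 0 ≤ s) (ht₁ : t₁ < T) :
    ParabolicRegular (-1) 1 s t₁ ρ where
  continuousOn := h.cont.mono (prod_mono_left (Icc_subset_Icc hs ht₁.le))
  left_eq t ht := by
    rw [h.bdry_left t ⟨hs.trans ht.1, ht.2.trans ht₁.le⟩,
      h.bdry_left s ⟨hs, (ht.1.trans ht.2).trans ht₁.le⟩]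
  right_eq t ht := by
    rw [h.bdry_right t ⟨hs.trans ht.1, ht.2.trans ht₁.le⟩,
      h.bdry_right s ⟨hs, (ht.1.trans ht.2).trans ht₁.le⟩]
  differentiableAt_time t ht x hx := ((h.smooth_t x hx).differentiableOn one_ne_zero)
    |>.differentiableAt (Ioo_mem_nhds (hs.trans_lt ht.1) (ht.2.trans_lt ht₁))
  differentiableAt_space t ht x hx :=
    h.differentiableAt_space ⟨hs.trans_lt ht.1, ht.2.trans_lt ht₁⟩ hx
  differentiableAt_deriv t ht x hx :=
    h.differentiableAt_deriv ⟨hs.trans_lt ht.1, ht.2.trans_lt ht₁⟩ hx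

lemma heatOp_eq (h : ClassicalSol j β ρm ρp T ρ) (hk : BoundedKernel j C) (ht : t ∈ Ioo 0 T)
    (hx : x ∈ Ioo (-1 : ℝ) 1) :
    heatOp ρ t x = β * nonlocalReaction (ρ t x) (convJ (deriv j) (ρ t) x) (deriv (ρ t) x)
      (convDir (deriv j) (deriv (ρ t)) x) := by
  have ht' := Ioo_subset_Icc_self ht
  have hρ := (h.differentiableAt_space ht hx).hasDerivAt
  have hχ : HasDerivAt (fun w => chi (ρ t w)) ((1 - 2 * ρ t x) * deriv (ρ t) x) x :=
    (hρ.mul (hρ.const_sub 1)).congr_deriv (by ring)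
  have hconv := hasDerivAt_deriv_convJ hk.contDiff hk.eq_zero hk.abs_deriv_le
    (h.continuousOn_space ht') (fun y hy => h.differentiableAt_space ht hy)
    (h.intervalIntegrable_deriv ht) hx
  have hflux := (h.differentiableAt_deriv ht hx).hasDerivAt.fun_sub ((hχ.const_mul β).fun_mul hconv)
  rw [heatOp, h.pde t ht x hx, hflux.deriv,
    (hasDerivAt_convJ hk.contDiff hk.abs_deriv_le (h.intervalIntegrable ht') x).deriv,
    nonlocalReaction]
  ring

lemma abs_convJ_deriv_le (h : ClassicalSol j β ρm ρp T ρ) (hk : BoundedKernel j C)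
    (ht : t ∈ Icc 0 T) (x : ℝ) : |convJ (deriv j) (ρ t) x| ≤ 6 * C := by
  simpa only [mul_one] using abs_convJ_le hk.abs_deriv_le
    (fun y hy => h.abs_le_one ht (Ioo_subset_Icc_self hy)) x

lemma abs_heatOp_le (h : ClassicalSol j β ρm ρp T ρ) (hk : BoundedKernel j C) {A σ : ℝ}
    (hA : 0 ≤ A) (hσ : 0 ≤ σ) (ht : t ∈ Ioo 0 T) (hosc : OscLip (Icc (-1) 1) A σ (ρ t))
    (hx : x ∈ Ioo (-1 : ℝ) 1) :
    |heatOp ρ t x| ≤ |β| * (6 * C) * |deriv (ρ t) x| + |β| * (6 * C) * A / σ := by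
  have hslope : ∀ y ∈ Ioo (-1 : ℝ) 1, |deriv (ρ t) y| ≤ A / σ := fun y hy =>
    hosc.abs_deriv_le hA hσ (Icc_mem_nhds hy.1 hy.2)
  rw [h.heatOp_eq hk ht hx, abs_mul]
  calc |β| * _ ≤ |β| * (6 * C * |deriv (ρ t) x| + 6 * C * (A / σ)) := by
        gcongr
        exact abs_nonlocalReaction_le
          (h.range t (Ioo_subset_Icc_self ht) x (Ioo_subset_Icc_self hx))
          (h.abs_convJ_deriv_le hk (Ioo_subset_Icc_self ht) x)
          (abs_convDir_le hk.abs_deriv_le hslope x) _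
    _ = |β| * (6 * C) * |deriv (ρ t) x| + |β| * (6 * C) * A / σ := by ring

lemma abs_convJ_sub_le (h₁ : ClassicalSol j β ρm ρp T ρ₁) (h₂ : ClassicalSol j β ρm ρp T ρ₂)
    (hk : BoundedKernel j C) {A : ℝ} (ht : t ∈ Icc 0 T)
    (hA : ∀ y ∈ Ioo (-1 : ℝ) 1, |ρ₁ t y - ρ₂ t y| ≤ A) (x : ℝ) :
    |convJ (deriv j) (ρ₁ t) x - convJ (deriv j) (ρ₂ t) x| ≤ 6 * C * A := by
  rw [← convJ_sub (hk.contDiff.continuous_deriv le_rfl) (h₁.intervalIntegrable ht)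
    (h₂.intervalIntegrable ht)]
  exact abs_convJ_le hk.abs_deriv_le hA x

lemma abs_convDir_sub_le (h₁ : ClassicalSol j β ρm ρp T ρ₁) (h₂ : ClassicalSol j β ρm ρp T ρ₂)
    (hk : BoundedKernel j C) {L : ℝ} (ht : t ∈ Ioo 0 T)
    (hL : ∀ y ∈ Ioo (-1 : ℝ) 1, |deriv (ρ₁ t) y - deriv (ρ₂ t) y| ≤ L) (x : ℝ) :
    |convDir (deriv j) (deriv (ρ₁ t)) x - convDir (deriv j) (deriv (ρ₂ t)) x| ≤ 6 * C * L := by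
  rw [← convDir_sub (hk.contDiff.continuous_deriv le_rfl) (h₁.intervalIntegrable_deriv ht)
    (h₂.intervalIntegrable_deriv ht)]
  exact abs_convDir_le hk.abs_deriv_le hL x

lemma deriv_sub_eq (h₁ : ClassicalSol j β ρm ρp T ρ₁) (h₂ : ClassicalSol j β ρm ρp T ρ₂)
    (ht : t ∈ Ioo 0 T) (hx : x ∈ Ioo (-1 : ℝ) 1) :
    deriv ((ρ₁ - ρ₂) t) x = deriv (ρ₁ t) x - deriv (ρ₂ t) x :=
  deriv_sub (h₁.differentiableAt_space ht hx) (h₂.differentiableAt_space ht hx)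

lemma abs_sub_le_of_oscLip (h₁ : ClassicalSol j β ρm ρp T ρ₁) (h₂ : ClassicalSol j β ρm ρp T ρ₂)
    {A σ : ℝ} (hA : 0 ≤ A) (ht : t ∈ Icc 0 T) (hosc : OscLip (Icc (-1) 1) A σ ((ρ₁ - ρ₂) t))
    (hx : x ∈ Icc (-1 : ℝ) 1) : |ρ₁ t x - ρ₂ t x| ≤ A := by
  have hboundary : (ρ₁ - ρ₂) t (-1) = 0 := by
    simp [h₁.bdry_left t ht, h₂.bdry_left t ht]
  simpa [hboundary] using hosc.abs_sub_le_osc hA hx (left_mem_Icc.2 (by norm_num : (-1 : ℝ) ≤ 1))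

lemma abs_heatOp_sub_le (h₁ : ClassicalSol j β ρm ρp T ρ₁) (h₂ : ClassicalSol j β ρm ρp T ρ₂)
    (hk : BoundedKernel j C) {A K σ : ℝ} (hA : 0 ≤ A) (hK : 0 ≤ K) (hσ : 0 ≤ σ)
    (ht : t ∈ Ioo 0 T) (hosc₂ : OscLip (Icc (-1) 1) K σ (ρ₂ t))
    (hosc : OscLip (Icc (-1) 1) A σ ((ρ₁ - ρ₂) t)) (hx : x ∈ Ioo (-1 : ℝ) 1) :
    |heatOp (ρ₁ - ρ₂) t x| ≤ |β| * (6 * C) * |deriv ((ρ₁ - ρ₂) t) x| +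
      (4 * K + 1) * (|β| * (6 * C)) * A / σ := by
  have ht' := Ioo_subset_Icc_self ht
  have hx' := Ioo_subset_Icc_self hx
  have hdiff : ∀ y ∈ Ioo (-1 : ℝ) 1, |ρ₁ t y - ρ₂ t y| ≤ A := fun y hy =>
    h₁.abs_sub_le_of_oscLip h₂ hA ht' hosc (Ioo_subset_Icc_self hy)
  have hslope₂ : ∀ y ∈ Ioo (-1 : ℝ) 1, |deriv (ρ₂ t) y| ≤ K * (1 / σ) := fun y hy =>
    (hosc₂.abs_deriv_le hK hσ (Icc_mem_nhds hy.1 hy.2)).trans_eq (by ring)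
  have hslope : ∀ y ∈ Ioo (-1 : ℝ) 1, |deriv (ρ₁ t) y - deriv (ρ₂ t) y| ≤ A * (1 / σ) :=
    fun y hy => by
      rw [← h₁.deriv_sub_eq h₂ ht hy, mul_one_div]
      exact hosc.abs_deriv_le hA hσ (Icc_mem_nhds hy.1 hy.2)
  obtain ⟨t₂, htt₂, ht₂⟩ := exists_between ht.2
  rw [(h₁.parabolicRegular le_rfl ht₂).heatOp_sub (h₂.parabolicRegular le_rfl ht₂)
    ⟨ht.1, htt₂.le⟩ hx, h₁.heatOp_eq hk ht hx, h₂.heatOp_eq hk ht hx, ← mul_sub, abs_mul,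
    h₁.deriv_sub_eq h₂ ht hx]
  refine (mul_le_mul_of_nonneg_left (abs_nonlocalReaction_sub_le (h₁.range t ht' x hx')
    (h₂.range t ht' x hx') (hdiff x hx) (h₁.abs_convJ_deriv_le hk ht' x)
    (h₂.abs_convJ_deriv_le hk ht' x) (h₁.abs_convJ_sub_le h₂ hk ht' hdiff x) (hslope₂ x hx)
    (abs_convDir_le hk.abs_deriv_le hslope₂ x) (h₁.abs_convDir_sub_le h₂ hk ht hslope x))
    (abs_nonneg β)).trans_eq (by ring)

end ClassicalSol

section Baire

lemma exists_eventually_mem_of_subset_iUnion {X ι : Type*} [TopologicalSpace X]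
    [LocallyCompactSpace X] [R1Space X] [Countable ι] {F : Set X} {E : ι → Set X}
    (hF : IsLocallyClosed F) (hne : F.Nonempty)
    (hclosed : ∀ i, IsClosed ((↑) ⁻¹' E i : Set F)) (hcover : F ⊆ ⋃ i, E i) :
    ∃ i, ∃ x ∈ F, ∀ᶠ y in 𝓝 x, y ∈ F → y ∈ E i := by
  have := hF.locallyCompactSpace
  have := hne.to_subtype
  have hcover' : ⋃ i, ((↑) ⁻¹' E i : Set F) = univ :=
    eq_univ_of_forall fun x => by simpa using hcover x.2
  obtain ⟨i, x, hx⟩ := nonempty_interior_of_iUnion_of_closed hclosed hcover'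
  refine ⟨i, x, x.2, eventually_nhdsWithin_iff.1 ?_⟩
  rw [nhdsWithin_eq_map_subtype_coe x.2]
  exact mem_interior_iff_mem_nhds.1 hx

variable {α ω δ : ℝ} {E : ℕ → Set ℝ}

lemma exists_Ioc_subset_compl {F : Set ℝ} {s t : ℝ} (hF : IsClosed F) (hst : s ≤ t) :
    ∃ r ∈ Icc s t, (r = s ∨ r ∈ F) ∧ Ioc r t ⊆ Fᶜ := by
  have hcompact : IsCompact (Icc s t ∩ insert s F) :=
    isCompact_Icc.inter_right (isClosed_singleton.union hF)
  obtain ⟨r, hr, hgreatest⟩ :=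
    hcompact.exists_isGreatest ⟨s, left_mem_Icc.2 hst, mem_insert s F⟩
  exact ⟨r, hr.1, hr.2, fun u hu huF =>
    hu.1.not_ge (hgreatest ⟨⟨hr.1.1.trans hu.1.le, hu.2⟩, mem_insert_of_mem s huF⟩)⟩

/-- If the residual set were nonempty, Baire's theorem would put a neighbourhood of one of its
points `t₀`, as far as it meets the residual set, in a single `E n`; forward propagation from the
last residual time before `t` then covers the gaps, so `t₀` is not residual after all. -/
theorem Ioo_subset_iUnion_interior (hmono : Monotone E)
    (hclosed : ∀ n, IsClosed ((↑) ⁻¹' E n : Set (Ioo α ω))) (hcover : Ioo α ω ⊆ ⋃ n, E n)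
    (hδ : 0 < δ)
    (hpropagate : ∀ n, ∃ m, ∀ s t, α < s → s < t → t < ω → t - s ≤ δ → s ∈ E n →
      Ioc s t ⊆ ⋃ k, interior (E k) → t ∈ E m) :
    Ioo α ω ⊆ ⋃ n, interior (E n) := by
  set U := ⋃ n, interior (E n)
  have hU : IsOpen U := isOpen_iUnion fun _ => isOpen_interior
  by_contra hnot
  obtain ⟨n, t₀, ht₀, hn⟩ := exists_eventually_mem_of_subset_iUnion (F := Ioo α ω \ U) (E := E)
    ⟨Ioo α ω, Uᶜ, isOpen_Ioo, hU.isClosed_compl, rfl⟩ (sdiff_nonempty.2 hnot)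
    (fun n => (hclosed n).preimage (continuous_inclusion sdiff_subset))
    (sdiff_subset.trans hcover)
  obtain ⟨ε, hε, hball⟩ := Metric.eventually_nhds_iff_ball.1 hn
  obtain ⟨s, hs, hst₀⟩ : ∃ s, max α (max (t₀ - ε) (t₀ - δ / 2)) < s ∧ s < t₀ :=
    exists_between (max_lt ht₀.1.1 (max_lt (by linarith) (by linarith)))
  simp only [max_lt_iff] at hs
  obtain ⟨k, hk⟩ := mem_iUnion.1 (hcover ⟨hs.1, hst₀.trans ht₀.1.2⟩)
  obtain ⟨m, hm⟩ := hpropagate (max n k)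
  refine ht₀.2 (mem_iUnion.2 ⟨max (max n k) m, mem_interior_iff_mem_nhds.2 ?_⟩)
  have hright : t₀ < min ω (min (t₀ + ε) (t₀ + δ / 2)) :=
    lt_min ht₀.1.2 (lt_min (by linarith) (by linarith))
  filter_upwards [Ioo_mem_nhds hst₀ hright] with t ht
  simp only [mem_Ioo, lt_min_iff] at ht
  obtain ⟨r, hr, hrE, hgap⟩ := exists_Ioc_subset_compl hU.isClosed_compl ht.1.le
  rw [compl_compl] at hgap
  have hr_mem : r ∈ E (max n k) := by
    rcases hrE with rfl | hrU
    · exact hmono (le_max_right n k) hk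
    · refine hmono (le_max_left n k) (hball r ?_ ⟨⟨?_, ?_⟩, hrU⟩)
      · rw [Metric.mem_ball, Real.dist_eq, abs_lt]
        constructor <;> linarith [hr.1, hr.2]
      · linarith [hr.1]
      · linarith [hr.2]
  rcases hr.2.eq_or_lt with rfl | hrt
  · exact hmono (le_max_left _ m) hr_mem
  · exact hmono (le_max_right _ m)
      (hm r t (hs.1.trans_le hr.1) hrt ht.2.1 (by linarith [hr.1]) hr_mem hgap)

end Baire

/-- The time step `δ` is so short that, over a time `2 * δ`, the equation with interaction strength
`β` and kernel bound `C` is a small perturbation of the heat equation. -/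
structure ShortTime (β C δ : ℝ) : Prop where
  pos : 0 < δ
  sqrt_le : √(2 * δ) ≤ 2
  small : 33 * (|β| * (6 * C)) * √(2 * δ) ≤ 1 / 16

/-- The times at which a profile `ρ t` of oscillation at most `1` is `(n + 1)`-Lipschitz. -/
def lipschitzTimes (ρ : ℝ → ℝ → ℝ) (n : ℕ) : Set ℝ :=
  {t | OscLip (Icc (-1) 1) 1 (1 / (n + 1 : ℝ)) (ρ t)}

lemma lipschitzTimes_mono (ρ : ℝ → ℝ → ℝ) : Monotone (lipschitzTimes ρ) := fun n m hnm t ht =>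
  OscLip.mono ht le_rfl zero_le_one (by positivity) (by gcongr)

section ShortTime

variable {β C δ s t₁ : ℝ}

lemma exists_shortTime (β C : ℝ) (hC : 0 ≤ C) : ∃ δ, ShortTime β C δ := by
  set Γ := 33 * (|β| * (6 * C))
  have hΓ : 0 ≤ Γ := by positivity
  set d := 1 / (16 * (1 + Γ))
  have hd : 0 < d := by positivity
  have hsqrt : √(2 * (d ^ 2 / 2)) = d := by rw [mul_div_cancel₀ _ two_ne_zero, Real.sqrt_sq hd.le]
  refine ⟨d ^ 2 / 2, by positivity, ?_, ?_⟩
  · rw [hsqrt, div_le_iff₀ (by positivity)]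
    linarith
  · rw [hsqrt, mul_one_div, div_le_div_iff₀ (by positivity) (by norm_num)]
    linarith

namespace ShortTime

lemma sqrt_le_of_le (hδ : ShortTime β C δ) {τ : ℝ} (hτ : τ ≤ 2 * δ) : √τ ≤ 2 :=
  (Real.sqrt_le_sqrt hτ).trans hδ.sqrt_le

lemma small_of_le (hδ : ShortTime β C δ) (hC : 0 ≤ C) {τ : ℝ} (hτ : τ ≤ 2 * δ) :
    33 * (|β| * (6 * C)) * √τ ≤ 1 / 16 :=
  (mul_le_mul_of_nonneg_left (Real.sqrt_le_sqrt hτ) (by positivity)).trans hδ.small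

lemma drift_le (hδ : ShortTime β C δ) (hC : 0 ≤ C) {τ : ℝ} (hτ : τ ≤ 2 * δ) :
    |β| * (6 * C) * √τ ≤ 1 / 16 := by
  linarith [hδ.small_of_le hC hτ, show 0 ≤ |β| * (6 * C) * √τ by positivity]

end ShortTime

end ShortTime

namespace ClassicalSol

variable {j : ℝ → ℝ} {β ρm ρp T C δ s t₁ t : ℝ} {ρ ρ₁ ρ₂ : ℝ → ℝ → ℝ}

lemma oscLip_eight_of_forall_Icc (h : ClassicalSol j β ρm ρp T ρ) (hk : BoundedKernel j C)
    (hδ : ShortTime β C δ) (hs : 0 ≤ s) (ht₁ : t₁ < T) (hlen : t₁ - s ≤ δ) {σ : ℝ} (hσ : 0 < σ)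
    (hσδ : σ ≤ √δ) (hbdd : ∀ t ∈ Icc s t₁, OscLip (Icc (-1) 1) 1 σ (ρ t)) :
    ∀ t ∈ Ioc s t₁, OscLip (Icc (-1) 1) 8 √(t - s) (ρ t) := by
  intro t ht
  have hC := hk.nonneg
  have hinit : OscLip (Icc (-1) 1) 1 √(s - (s - σ ^ 2)) (ρ s) := by
    rw [sub_sub_cancel, Real.sqrt_sq hσ.le]
    exact hbdd s ⟨le_rfl, ht.1.le.trans ht.2⟩
  have hτ : t₁ - (s - σ ^ 2) ≤ 2 * δ := by linarith [(Real.le_sqrt' hσ).1 hσδ]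
  have hbdd' : ∀ t ∈ Ioc s t₁, OscLip (Icc (-1) 1) (1 * (√δ / σ)) √(t - s) (ρ t) := fun t ht =>
    ((hbdd t (Ioc_subset_Icc_self ht)).rescale zero_le_one hσ hσδ).mono le_rfl (by positivity)
      (Real.sqrt_pos.2 (sub_pos.2 ht.1)) (Real.sqrt_le_sqrt (by linarith [ht.2]))
  simpa only [mul_one] using (h.parabolicRegular hs ht₁).oscLip_of_heatOp_le one_pos
    (by positivity) (by positivity) (sub_lt_self s (by positivity))
    ((hδ.sqrt_le_of_le hτ).trans_eq (by norm_num))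
    ((hδ.drift_le hC hτ).trans (by norm_num)) (hδ.drift_le hC hτ) hinit
    (fun A hA t ht hosc x hx => h.abs_heatOp_le hk hA (Real.sqrt_nonneg _)
      ⟨hs.trans_lt ht.1, ht.2.trans_lt ht₁⟩ hosc hx) (by positivity) hbdd' t ht

lemma oscLip_eight_of_Ioc_subset (h : ClassicalSol j β ρm ρp T ρ) (hk : BoundedKernel j C)
    (hδ : ShortTime β C δ) (hs : 0 ≤ s) (ht₁ : t₁ < T) (hlen : t₁ - s ≤ δ)
    (hsub : Ioc s t₁ ⊆ ⋃ n, interior (lipschitzTimes ρ n)) :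
    ∀ t ∈ Ioc s t₁, OscLip (Icc (-1) 1) 8 √(t - s) (ρ t) := by
  have hlater : ∀ s' t, s < s' → s' < t → t ≤ t₁ → OscLip (Icc (-1) 1) 8 √(t - s') (ρ t) := by
    intro s' t hs' hs't htt₁
    obtain ⟨n, hn⟩ := (isCompact_Icc (a := s') (b := t)).elim_directed_cover
      (fun n => interior (lipschitzTimes ρ n)) (fun _ => isOpen_interior)
      (fun r hr => hsub ⟨hs'.trans_le hr.1, hr.2.trans htt₁⟩)
      (Monotone.directed_le fun _ _ hnm => interior_mono (lipschitzTimes_mono ρ hnm))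
    have hσ : 0 < min (1 / (n + 1 : ℝ)) √δ := lt_min (by positivity) (Real.sqrt_pos.2 hδ.pos)
    exact h.oscLip_eight_of_forall_Icc hk hδ (hs.trans hs'.le) (htt₁.trans_lt ht₁)
      (by linarith) hσ (min_le_right _ _)
      (fun r hr => (interior_subset (hn hr)).mono le_rfl zero_le_one hσ (min_le_left _ _))
      t ⟨hs't, le_rfl⟩
  intro t ht x hx y hy
  have hcont : ContinuousAt (fun s' => 8 * min 1 (|x - y| / √(t - s'))) s := by
    have hne : √(t - s) ≠ 0 := (Real.sqrt_pos.2 (sub_pos.2 ht.1)).ne'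
    fun_prop (disch := assumption)
  refine ge_of_tendsto (hcont.tendsto.mono_left (nhdsWithin_le_nhds (s := Ioi s))) ?_
  filter_upwards [Ioo_mem_nhdsGT ht.1] with s' hs'
  exact hlater s' t hs'.1 hs'.2 ht.2 x hx y hy

lemma mem_lipschitzTimes (h : ClassicalSol j β ρm ρp T ρ) (ht : t ∈ Icc 0 T) {L : ℝ} {n : ℕ}
    (hLn : L ≤ n)
    (hL : ∀ x ∈ Icc (-1 : ℝ) 1, ∀ y ∈ Icc (-1 : ℝ) 1, |ρ t x - ρ t y| ≤ L * |x - y|) :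
    t ∈ lipschitzTimes ρ n := by
  intro x hx y hy
  rw [one_mul]
  refine le_min (h.abs_sub_le_one ht hx hy) ((hL x hx y hy).trans ?_)
  rw [one_div, div_inv_eq_mul, mul_comm]
  gcongr
  linarith

lemma exists_mem_lipschitzTimes (h : ClassicalSol j β ρm ρp T ρ) (ht : t ∈ Ioo 0 T) :
    ∃ n, t ∈ lipschitzTimes ρ n := by
  obtain ⟨g, hg, hg_eq⟩ := h.du_ext t ht
  obtain ⟨L, hL⟩ := isCompact_Icc.exists_bound_of_continuousOn hg
  obtain ⟨n, hn⟩ := exists_nat_ge L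
  have hbound : ∀ x ∈ Ioo (-1 : ℝ) 1, ‖deriv (ρ t) x‖₊ ≤ (n : NNReal) := fun x hx => by
    rw [← NNReal.coe_le_coe, coe_nnnorm, NNReal.coe_natCast]
    exact hg_eq x hx ▸ (hL x (Ioo_subset_Icc_self hx)).trans hn
  have hclosure : closure (Ioo (-1 : ℝ) 1) = Icc (-1) 1 := closure_Ioo (by norm_num)
  have hlip : LipschitzOnWith n (ρ t) (Icc (-1) 1) := by
    rw [← hclosure]
    exact (Convex.lipschitzOnWith_of_nnnorm_deriv_le
      (fun x hx => h.differentiableAt_space ht hx) hbound (convex_Ioo _ _)).closure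
      (hclosure ▸ h.continuousOn_space (Ioo_subset_Icc_self ht))
  exact ⟨n, h.mem_lipschitzTimes (Ioo_subset_Icc_self ht) le_rfl
    fun x hx y hy => hlip.dist_le_mul x hx y hy⟩

lemma isClosed_preimage_lipschitzTimes (h : ClassicalSol j β ρm ρp T ρ) (n : ℕ) :
    IsClosed ((↑) ⁻¹' lipschitzTimes ρ n : Set (Ioo 0 T)) := by
  have hcont : ∀ x ∈ Icc (-1 : ℝ) 1, Continuous fun t : Ioo 0 T => ρ t x := fun x hx =>
    (h.continuousOn_time hx).comp_continuous continuous_subtype_val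
      fun t => Ioo_subset_Icc_self t.2
  have hinter : ((↑) ⁻¹' lipschitzTimes ρ n : Set (Ioo 0 T)) =
      ⋂ x ∈ Icc (-1 : ℝ) 1, ⋂ y ∈ Icc (-1 : ℝ) 1,
        {t : Ioo 0 T | |ρ t x - ρ t y| ≤ 1 * min 1 (|x - y| / (1 / (n + 1 : ℝ)))} := by
    ext t
    simp only [lipschitzTimes, OscLip, mem_preimage, mem_iInter, mem_ofPred_eq]
  rw [hinter]
  exact isClosed_biInter fun x hx => isClosed_biInter fun y hy =>
    isClosed_le ((hcont x hx).sub (hcont y hy)).abs continuous_const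

lemma exists_mem_lipschitzTimes_of_Ioc_subset (h : ClassicalSol j β ρm ρp T ρ)
    (hk : BoundedKernel j C) (hδ : ShortTime β C δ) (n : ℕ) :
    ∃ m, ∀ s t, 0 < s → s < t → t < T → t - s ≤ δ → s ∈ lipschitzTimes ρ n →
      Ioc s t ⊆ ⋃ k, interior (lipschitzTimes ρ k) → t ∈ lipschitzTimes ρ m := by
  have hC := hk.nonneg
  set F := |β| * (6 * C) * 8
  obtain ⟨σ, hσ, hσn, hσδ⟩ : ∃ σ, 0 < σ ∧ σ ≤ 1 / (n + 1 : ℝ) ∧ σ ≤ √δ :=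
    ⟨_, lt_min (by positivity) (Real.sqrt_pos.2 hδ.pos), min_le_left _ _, min_le_right _ _⟩
  obtain ⟨m, hm⟩ := exists_nat_ge (4 * 1 / σ + 8 * F)
  refine ⟨m, fun s t hs hst htT hlen hsn hsub => ?_⟩
  have hs₀ : s - σ ^ 2 < s := sub_lt_self s (by positivity)
  have hsqrt : √(s - (s - σ ^ 2)) = σ := by rw [sub_sub_cancel, Real.sqrt_sq hσ.le]
  have hτ : t - (s - σ ^ 2) ≤ 2 * δ := by linarith [(Real.le_sqrt' hσ).1 hσδ]
  refine h.mem_lipschitzTimes ⟨(hs.trans hst).le, htT.le⟩ hm fun x hx y hy => ?_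
  calc |ρ t x - ρ t y| ≤ heatBarrier 1 F (s - σ ^ 2) s t |x - y| :=
        (h.parabolicRegular hs.le htT).abs_sub_le_heatBarrier one_pos (by positivity)
          (by positivity) hs₀ ((hδ.sqrt_le_of_le hτ).trans_eq (by norm_num))
          ((hδ.drift_le hC hτ).trans (by norm_num))
          (by rw [hsqrt]; exact OscLip.mono hsn le_rfl zero_le_one hσ hσn)
          (fun r hr z hz => h.abs_heatOp_le hk (by norm_num) (Real.sqrt_nonneg _)
            ⟨hs.trans hr.1, hr.2.trans_lt htT⟩
            (h.oscLip_eight_of_Ioc_subset hk hδ hs.le htT hlen hsub r hr) hz)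
          ⟨hst.le, le_rfl⟩ hx hy
    _ ≤ (4 * 1 / √(s - (s - σ ^ 2)) + 8 * F) * |x - y| :=
        heatBarrier_le_lip zero_le_one (by positivity) hs₀ hst (abs_nonneg _)
    _ = (4 * 1 / σ + 8 * F) * |x - y| := by rw [hsqrt]

theorem Ioo_subset_iUnion_interior_lipschitzTimes (h : ClassicalSol j β ρm ρp T ρ)
    (hk : BoundedKernel j C) (hδ : ShortTime β C δ) :
    Ioo 0 T ⊆ ⋃ n, interior (lipschitzTimes ρ n) :=
  Ioo_subset_iUnion_interior (lipschitzTimes_mono ρ) h.isClosed_preimage_lipschitzTimes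
    (fun _ ht => mem_iUnion.2 (h.exists_mem_lipschitzTimes ht)) hδ.pos
    (h.exists_mem_lipschitzTimes_of_Ioc_subset hk hδ)

theorem oscLip_eight (h : ClassicalSol j β ρm ρp T ρ) (hk : BoundedKernel j C)
    (hδ : ShortTime β C δ) (hs : 0 ≤ s) (ht₁ : t₁ < T) (hlen : t₁ - s ≤ δ) :
    ∀ t ∈ Ioc s t₁, OscLip (Icc (-1) 1) 8 √(t - s) (ρ t) :=
  h.oscLip_eight_of_Ioc_subset hk hδ hs ht₁ hlen fun _ hr =>
    h.Ioo_subset_iUnion_interior_lipschitzTimes hk hδ ⟨hs.trans_lt hr.1, hr.2.trans_lt ht₁⟩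

lemma abs_sub_le_of_eqOn (h₁ : ClassicalSol j β ρm ρp T ρ₁) (h₂ : ClassicalSol j β ρm ρp T ρ₂)
    (hk : BoundedKernel j C) (hδ : ShortTime β C δ) (hs : 0 ≤ s) (ht₁ : t₁ < T)
    (hlen : t₁ - s ≤ δ) (heq : EqOn (ρ₁ s) (ρ₂ s) (Icc (-1) 1)) {ε x : ℝ} (hε : 0 < ε)
    (ht : t ∈ Ioc s t₁) (hx : x ∈ Icc (-1 : ℝ) 1) : |ρ₁ t x - ρ₂ t x| ≤ 8 * ε := by
  have hC := hk.nonneg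
  have hosc₁ := h₁.oscLip_eight hk hδ hs ht₁ hlen
  have hosc₂ := h₂.oscLip_eight hk hδ hs ht₁ hlen
  have hτ : t₁ - (s - δ) ≤ 2 * δ := by linarith
  have hinit : OscLip (Icc (-1) 1) ε √(s - (s - δ)) ((ρ₁ - ρ₂) s) := fun y hy z hz => by
    simp only [Pi.sub_apply, heq hy, heq hz, sub_self, abs_zero]
    positivity
  have hosc := ((h₁.parabolicRegular hs ht₁).sub (h₂.parabolicRegular hs ht₁)).oscLip_of_heatOp_le
    hε (by positivity) (by positivity) (sub_lt_self s hδ.pos)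
    ((hδ.sqrt_le_of_le hτ).trans_eq (by norm_num)) ((hδ.drift_le hC hτ).trans (by norm_num))
    (hδ.small_of_le hC hτ) hinit
    (fun A hA r hr hosc y hy => (h₁.abs_heatOp_sub_le h₂ hk hA (by norm_num) (Real.sqrt_nonneg _)
      ⟨hs.trans_lt hr.1, hr.2.trans_lt ht₁⟩ (hosc₂ r hr) hosc hy).trans_eq (by norm_num))
    (by norm_num) (fun r hr => (hosc₁ r hr).sub (hosc₂ r hr)) t ht
  exact h₁.abs_sub_le_of_oscLip h₂ (by positivity)
    ⟨hs.trans ht.1.le, ht.2.trans ht₁.le⟩ hosc hx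

lemma eqOn_of_eqOn (h₁ : ClassicalSol j β ρm ρp T ρ₁) (h₂ : ClassicalSol j β ρm ρp T ρ₂)
    (hk : BoundedKernel j C) (hδ : ShortTime β C δ) (hs : 0 ≤ s) (ht₁ : t₁ < T)
    (hlen : t₁ - s ≤ δ) (heq : EqOn (ρ₁ s) (ρ₂ s) (Icc (-1) 1)) (ht : t ∈ Ioc s t₁) :
    EqOn (ρ₁ t) (ρ₂ t) (Icc (-1) 1) := fun x hx => by
  refine eq_of_forall_dist_le fun ε hε => ?_
  have hle := h₁.abs_sub_le_of_eqOn h₂ hk hδ hs ht₁ hlen heq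
    (div_pos hε (by norm_num : (0 : ℝ) < 8)) ht hx
  rwa [mul_div_cancel₀ _ (by norm_num)] at hle

lemma isClosed_setOf_eqOn (h₁ : ClassicalSol j β ρm ρp T ρ₁)
    (h₂ : ClassicalSol j β ρm ρp T ρ₂) :
    IsClosed ({t | EqOn (ρ₁ t) (ρ₂ t) (Icc (-1) 1)} ∩ Icc 0 T) := by
  have hclosed : ∀ x ∈ Icc (-1 : ℝ) 1, IsClosed {t ∈ Icc 0 T | ρ₁ t x = ρ₂ t x} := fun x hx =>
    isClosed_Icc.isClosed_eq (h₁.continuousOn_time hx) (h₂.continuousOn_time hx)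
  convert (isClosed_biInter hclosed).inter (isClosed_Icc (a := 0) (b := T)) using 1
  ext t
  simp +contextual [EqOn, and_comm]

end ClassicalSol

theorem classical_solution_uniqueness_general {j : ℝ → ℝ} (hj : ContDiff ℝ 1 j)
    (hsupp : ∀ u, 2 < |u| → j u = 0) {β ρm ρp T : ℝ} {ρ₁ ρ₂ : ℝ → ℝ → ℝ}
    (h₁ : ClassicalSol j β ρm ρp T ρ₁) (h₂ : ClassicalSol j β ρm ρp T ρ₂)
    (hinit : EqOn (ρ₁ 0) (ρ₂ 0) (Icc (-1) 1)) :
    ∀ t ∈ Icc 0 T, EqOn (ρ₁ t) (ρ₂ t) (Icc (-1) 1) := by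
  obtain ⟨C, hC⟩ := exists_abs_deriv_le hj hsupp
  have hk : BoundedKernel j C := ⟨hj, hsupp, hC⟩
  obtain ⟨δ, hδ⟩ := exists_shortTime β C hk.nonneg
  refine (h₁.isClosed_setOf_eqOn h₂).Icc_subset_of_forall_mem_nhdsWithin hinit ?_
  rintro s ⟨heq, hs⟩
  filter_upwards [Ioo_mem_nhdsGT (lt_min hs.2 (lt_add_of_pos_right s hδ.pos))] with t ht
  exact h₁.eqOn_of_eqOn h₂ hk hδ hs.1 (ht.2.trans_le (min_le_left _ _))
    (sub_le_iff_le_add'.2 (ht.2.le.trans (min_le_right _ _))) heq ⟨ht.1, le_rfl⟩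

/-- for every `β ≥ 0`, classical solutions of the nonlocal boundary value
problem with the same boundary values and the same initial datum coincide. -/
theorem classical_solution_uniqueness
    (j : ℝ → ℝ)
    (hj_smooth : ContDiff ℝ 1 j)
    (hj_nonneg : ∀ u, 0 ≤ j u)
    (hj_even : ∀ u, j (-u) = j u)
    (hj_supp : ∀ u : ℝ, 1 < |u| → j u = 0)
    (hj_int : (∫ u : ℝ, j u) = 1)
    (ρm ρp : ℝ) (hρm : ρm ∈ Ioo (0:ℝ) 1) (hρp : ρp ∈ Ioo (0:ℝ) 1)
    (β : ℝ) (hβ : 0 ≤ β) (T : ℝ) (hT : 0 < T)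
    (ρ₁ ρ₂ : ℝ → ℝ → ℝ)
    (h₁ : ClassicalSol j β ρm ρp T ρ₁) (h₂ : ClassicalSol j β ρm ρp T ρ₂)
    (hinit : ∀ u ∈ Icc (-1:ℝ) 1, ρ₁ 0 u = ρ₂ 0 u) :
    ∀ t ∈ Icc (0:ℝ) T, ∀ u ∈ Icc (-1:ℝ) 1, ρ₁ t u = ρ₂ t u :=
  classical_solution_uniqueness_general hj_smooth
    (fun u hu => hj_supp u (one_lt_two.trans hu)) h₁ h₂ hinit

end
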